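/- arXiv:1806.00469 — 10 statements merged into one kernel-verified Lean document; each statement's English description precedes it below -/
import Mathlib

section
/- Let N > ℓ ≥ 1 be integers and let W, Z_1, ..., Z_N be random variables on a common probability space, each taking values in a finite set. Suppose (decodability) H(W | Z_1, ..., Z_N) = 0, and (security) for every subset L ⊆ {1,...,N} with |L| = ℓ, the tuple Z_L = (Z_i)_{i ∈ L} satisfies I(W ; Z_L) = 0. Then H(W) ≤ ((N − ℓ)/N) · ∑_{i=1}^{N} H(Z_i). -/
/-!
For every set `L` of `ℓ` servers, security and decodability give
`H(W) = H(W, Z_L) - H(Z_L) ≤ H(W, Z) - H(Z_L) = H(Z) - H(Z_L) ≤ H(Z_{Lᶜ}) ≤ ∑_{i ∉ L} H(Z_i)`.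
Averaging this over the `N` cyclic shifts of one fixed set `Lᶜ` of size `N - ℓ` counts every
server `N - ℓ` times, which gives the factor `(N - ℓ) / N`.

The only facts about entropy needed are that it does not increase under a function
(`Hent_comp_le`) and that it is subadditive (`Hent_pair_le`, a consequence of `log t ≤ t - 1`).
-/

open MeasureTheory ProbabilityTheory

/-- Shannon entropy of a random variable `X` taking values in a finite set:
`H(X) = -∑ₓ P(X = x) log P(X = x)`. -/
noncomputable def Hent {Ω : Type*} [MeasurableSpace Ω] (μ : Measure Ω)
    {α : Type*} [Fintype α] (X : Ω → α) : ℝ :=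
  - ∑ x : α, (μ (X ⁻¹' {x})).toReal * Real.log (μ (X ⁻¹' {x})).toReal

/-- Conditional entropy `H(X | Y) = H(X, Y) - H(Y)`. -/
noncomputable def condEnt {Ω : Type*} [MeasurableSpace Ω] (μ : Measure Ω)
    {α β : Type*} [Fintype α] [Fintype β] (X : Ω → α) (Y : Ω → β) : ℝ :=
  Hent μ (fun ω => (X ω, Y ω)) - Hent μ Y

/-- Mutual information `I(X ; Y) = H(X) + H(Y) - H(X, Y)`. -/
noncomputable def mutInfo {Ω : Type*} [MeasurableSpace Ω] (μ : Measure Ω)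
    {α β : Type*} [Fintype α] [Fintype β] (X : Ω → α) (Y : Ω → β) : ℝ :=
  Hent μ X + Hent μ Y - Hent μ (fun ω => (X ω, Y ω))

/-- Change of variables: the expectation of `g (f X)` computed from the law of `X` and from the
law of `f X`. -/
lemma sum_law_comp {Ω : Type*} [MeasurableSpace Ω] (μ : Measure Ω) [IsProbabilityMeasure μ]
    {α β : Type*} [Fintype α] [Fintype β] (X : Ω → α) (hX : ∀ x, MeasurableSet (X ⁻¹' {x}))
    (f : α → β) (g : β → ℝ) :
    ∑ x, μ.real (X ⁻¹' {x}) * g (f x) = ∑ y, μ.real ((fun ω => f (X ω)) ⁻¹' {y}) * g y := by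
  classical
  rw [← Finset.sum_fiberwise Finset.univ f]
  refine Finset.sum_congr rfl fun y _ => ?_
  have h : μ.real ((fun ω => f (X ω)) ⁻¹' {y})
      = ∑ x with f x = y, μ.real (X ⁻¹' {x}) := by
    rw [sum_measureReal_preimage_singleton _ (fun x _ => hX x)]
    congr 1
    ext ω
    simp
  rw [h, Finset.sum_mul]
  refine Finset.sum_congr rfl fun x hx => ?_
  rw [(Finset.mem_filter.1 hx).2]

lemma sum_law_eq_one {Ω : Type*} [MeasurableSpace Ω] (μ : Measure Ω) [IsProbabilityMeasure μ]
    {α : Type*} [Fintype α] (X : Ω → α) (hX : ∀ x, MeasurableSet (X ⁻¹' {x})) :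
    ∑ x, μ.real (X ⁻¹' {x}) = 1 := by
  rw [sum_measureReal_preimage_singleton _ (fun x _ => hX x)]
  simp

lemma Hent_comp_le {Ω : Type*} [MeasurableSpace Ω] (μ : Measure Ω) [IsProbabilityMeasure μ]
    {α β : Type*} [Fintype α] [Fintype β] (X : Ω → α) (hX : ∀ x, MeasurableSet (X ⁻¹' {x}))
    (f : α → β) : Hent μ (fun ω => f (X ω)) ≤ Hent μ X := by
  have h := sum_law_comp μ X hX f (fun y => Real.log (μ.real ((fun ω => f (X ω)) ⁻¹' {y})))
  refine neg_le_neg (le_trans ?_ h.le)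
  refine Finset.sum_le_sum fun x _ => ?_
  change μ.real (X ⁻¹' {x}) * Real.log (μ.real (X ⁻¹' {x})) ≤ _
  rcases (measureReal_nonneg (μ := μ) (s := X ⁻¹' {x})).eq_or_lt with h0 | h0
  · simp [← h0]
  · refine mul_le_mul_of_nonneg_left (Real.log_le_log h0 (measureReal_mono ?_)) h0.le
    intro ω hω
    simp only [Set.mem_preimage, Set.mem_singleton_iff] at hω ⊢
    rw [hω]

/-- The pointwise form of Gibbs' inequality, with junk `log 0` harmless because `p ≤ a, b`. -/
lemma gibbs_term {p a b : ℝ} (hp : 0 ≤ p) (ha : p ≤ a) (hb : p ≤ b) :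
    p * Real.log a + p * Real.log b + (p - a * b) ≤ p * Real.log p := by
  rcases hp.eq_or_lt with rfl | h0
  · simpa using mul_nonneg ha hb
  · have ha0 := h0.trans_le ha
    have hb0 := h0.trans_le hb
    have h := Real.log_le_sub_one_of_pos (div_pos (mul_pos ha0 hb0) h0)
    rw [Real.log_div (mul_pos ha0 hb0).ne' h0.ne', Real.log_mul ha0.ne' hb0.ne'] at h
    have h2 := mul_le_mul_of_nonneg_left h h0.le
    have h3 : p * (a * b / p - 1) = a * b - p := by field_simp
    rw [h3] at h2
    linarith

lemma Hent_pair_le {Ω : Type*} [MeasurableSpace Ω] (μ : Measure Ω) [IsProbabilityMeasure μ]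
    {α β : Type*} [Fintype α] [Fintype β] (X : Ω → α) (Y : Ω → β)
    (hX : ∀ x, MeasurableSet (X ⁻¹' {x})) (hY : ∀ y, MeasurableSet (Y ⁻¹' {y})) :
    Hent μ (fun ω => (X ω, Y ω)) ≤ Hent μ X + Hent μ Y := by
  have hXY : ∀ z : α × β, MeasurableSet ((fun ω => (X ω, Y ω)) ⁻¹' {z}) := by
    rintro ⟨x, y⟩
    convert (hX x).inter (hY y) using 1
    ext ω
    simp
  have h1 := sum_law_comp μ _ hXY Prod.fst (fun x => Real.log (μ.real (X ⁻¹' {x})))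
  have h2 := sum_law_comp μ _ hXY Prod.snd (fun y => Real.log (μ.real (Y ⁻¹' {y})))
  have h3 := sum_law_eq_one μ _ hXY
  have h4 : ∑ z : α × β, μ.real (X ⁻¹' {z.1}) * μ.real (Y ⁻¹' {z.2}) = 1 := by
    rw [Fintype.sum_prod_type]
    dsimp only
    rw [← Fintype.sum_mul_sum, sum_law_eq_one μ X hX,
      sum_law_eq_one μ Y hY, one_mul]
  have key := Finset.sum_le_sum fun (z : α × β) (_ : z ∈ Finset.univ) =>
    gibbs_term (p := μ.real ((fun ω => (X ω, Y ω)) ⁻¹' {z})) (a := μ.real (X ⁻¹' {z.1}))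
      (b := μ.real (Y ⁻¹' {z.2})) measureReal_nonneg
      (measureReal_mono fun ω hω => by
        simp only [Set.mem_preimage, Set.mem_singleton_iff] at hω ⊢
        rw [← hω])
      (measureReal_mono fun ω hω => by
        simp only [Set.mem_preimage, Set.mem_singleton_iff] at hω ⊢
        rw [← hω])
  simp only [Finset.sum_add_distrib, Finset.sum_sub_distrib] at key
  rw [h1, h2, h3, h4] at key
  simp only [Hent, ← Measure.real_def]
  linarith

lemma Hent_pi_le {Ω : Type*} [MeasurableSpace Ω] (μ : Measure Ω) [IsProbabilityMeasure μ]
    {ι : Type*} [DecidableEq ι]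
    {ζ : ι → Type*} [∀ i, Fintype (ζ i)] [∀ i, MeasurableSpace (ζ i)]
    [∀ i, MeasurableSingletonClass (ζ i)]
    (Z : ∀ i, Ω → ζ i) (hZ : ∀ i, Measurable (Z i)) (S : Finset ι) :
    Hent μ (fun ω => fun i : S => Z i.1 ω) ≤ ∑ i ∈ S, Hent μ (Z i) := by
  have hS : ∀ (T : Finset ι) (z : ∀ i : T, ζ i.1),
      MeasurableSet ((fun ω => fun i : T => Z i.1 ω) ⁻¹' {z}) := fun T z =>
    measurable_pi_lambda _ (fun i : T => hZ i.1) (measurableSet_singleton z)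
  induction S using Finset.induction_on with
  | empty =>
    -- the empty tuple is a constant, with the single probability `1`
    have h : ∀ z : (∀ i : (∅ : Finset ι), ζ i.1),
        (fun ω => fun i : (∅ : Finset ι) => Z i.1 ω) ⁻¹' {z} = Set.univ := fun z => by
      ext ω
      simpa using Subsingleton.elim _ _
    simp only [Hent, h]
    simp
  | insert a S ha ih =>
    rw [Finset.sum_insert ha]
    have ha' : ∀ z, MeasurableSet (Z a ⁻¹' {z}) := fun z => hZ a (measurableSet_singleton z)
    have hp : ∀ z, MeasurableSet ((fun ω => (Z a ω, fun i : S => Z i.1 ω)) ⁻¹' {z}) := fun z =>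
      ((hZ a).prodMk (measurable_pi_lambda _ (fun i : S => hZ i.1))) (measurableSet_singleton z)
    have h1 := Hent_comp_le μ _ hp
      (fun (q : ζ a × (∀ i : S, ζ i.1)) (i : (insert a S : Finset ι)) =>
        if h : i.1 = a then cast (congrArg ζ h.symm) q.1
        else q.2 ⟨i.1, (Finset.mem_insert.1 i.2).resolve_left h⟩)
    have h2 := Hent_pair_le μ _ _ ha' (hS S)
    have h3 : (fun ω => fun i : (insert a S : Finset ι) => Z i.1 ω) =
        fun ω => (fun (q : ζ a × (∀ i : S, ζ i.1)) (i : (insert a S : Finset ι)) =>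
        if h : i.1 = a then cast (congrArg ζ h.symm) q.1
        else q.2 ⟨i.1, (Finset.mem_insert.1 i.2).resolve_left h⟩)
          (Z a ω, fun i : S => Z i.1 ω) := by
      funext ω i
      obtain ⟨i, hi⟩ := i
      by_cases h : i = a
      · subst h
        simp
      · simp [h]
    rw [h3]
    linarith

/-- Averaging over cyclic shifts: a bound valid for the sum of `h` over every `m`-element set
holds with the average of `h` scaled by `m`. -/
lemma le_average_of_forall_card {N m : ℕ} (hN : 0 < N) (hm : m ≤ N) (h : Fin N → ℝ) (c : ℝ)
    (hc : ∀ S : Finset (Fin N), S.card = m → c ≤ ∑ i ∈ S, h i) :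
    c ≤ ((m : ℝ) / N) * ∑ i, h i := by
  have : NeZero N := ⟨hN.ne'⟩
  obtain ⟨S, -, hS⟩ := Finset.exists_subset_card_eq (s := (Finset.univ : Finset (Fin N)))
    (n := m) (by simpa using hm)
  have h1 : ∀ k : Fin N, c ≤ ∑ i ∈ S, h (i + k) := fun k => by
    have := hc (S.map (Equiv.addRight k).toEmbedding) (by simpa using hS)
    simpa using this
  have h2 := Finset.sum_le_sum fun (k : Fin N) (_ : k ∈ Finset.univ) => h1 k
  rw [Finset.sum_comm] at h2
  have h3 : ∀ i : Fin N, ∑ k, h (i + k) = ∑ k, h k := fun i =>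
    Equiv.sum_comp (Equiv.addLeft i) h
  simp only [h3, Finset.sum_const, hS, Finset.card_univ, Fintype.card_fin, nsmul_eq_mul] at h2
  have hN' : (0 : ℝ) < N := by exact_mod_cast hN
  rw [div_mul_eq_mul_div, le_div_iff₀ hN']
  linarith

/-- Converse of Theorem 1: if `W` is decodable from the answers `Z₁, …, Z_N` and every
`ℓ`-subset of the answers is independent of `W`, then
`H(W) ≤ ((N - ℓ)/N) ∑ᵢ H(Zᵢ)`. -/
theorem one_sided_converse
    {Ω : Type*} [MeasurableSpace Ω] (μ : Measure Ω) [IsProbabilityMeasure μ]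
    {N ℓ : ℕ} (hℓ : 1 ≤ ℓ) (hN : ℓ < N)
    {α : Type*} [Fintype α] [MeasurableSpace α] [MeasurableSingletonClass α]
    {ζ : Fin N → Type*} [∀ i, Fintype (ζ i)] [∀ i, MeasurableSpace (ζ i)]
    [∀ i, MeasurableSingletonClass (ζ i)]
    (W : Ω → α) (hW : Measurable W)
    (Z : ∀ i, Ω → ζ i) (hZ : ∀ i, Measurable (Z i))
    (hdec : condEnt μ W (fun ω => fun i => Z i ω) = 0)
    (hsec : ∀ L : Finset (Fin N), L.card = ℓ →
      mutInfo μ W (fun ω => fun i : L => Z i.1 ω) = 0) :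
    Hent μ W ≤ (((N : ℝ) - ℓ) / N) * ∑ i, Hent μ (Z i) := by
  rw [← Nat.cast_sub hN.le]
  refine le_average_of_forall_card (by omega) (Nat.sub_le _ _) _ _ fun S hS => ?_
  have hL : Sᶜ.card = ℓ := by
    rw [Finset.card_compl, hS, Fintype.card_fin]
    omega
  have hsecL := hsec Sᶜ hL
  unfold mutInfo at hsecL
  unfold condEnt at hdec
  have mT : ∀ T : Finset (Fin N), Measurable (fun ω => fun i : T => Z i.1 ω) := fun T =>
    measurable_pi_lambda _ (fun i : T => hZ i.1)
  have mAll : Measurable (fun ω => fun i => Z i ω) := measurable_pi_lambda _ hZ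
  -- `H(W, Z_L) ≤ H(W, Z)` with `L = Sᶜ`
  have h1 := Hent_comp_le μ (fun ω => (W ω, fun i => Z i ω))
    (fun z => (hW.prodMk mAll) (measurableSet_singleton z))
    (fun q => (q.1, fun i : (Sᶜ : Finset (Fin N)) => q.2 i.1))
  -- `H(Z) ≤ H(Z_L, Z_S)`
  have h2 := Hent_comp_le μ
    (fun ω => ((fun i : (Sᶜ : Finset (Fin N)) => Z i.1 ω), fun i : S => Z i.1 ω))
    (fun z => ((mT Sᶜ).prodMk (mT S)) (measurableSet_singleton z))
    (fun q i => if h : i ∈ S then q.2 ⟨i, h⟩ else q.1 ⟨i, Finset.mem_compl.2 h⟩)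
  simp only [dite_eq_ite, ite_self] at h2
  have h3 := Hent_pair_le μ (fun ω => fun i : (Sᶜ : Finset (Fin N)) => Z i.1 ω)
    (fun ω => fun i : S => Z i.1 ω) (fun z => mT _ (measurableSet_singleton z))
    (fun z => mT _ (measurableSet_singleton z))
  have h4 := Hent_pi_le μ Z hZ S
  linarith
end

section
/- (Han's inequality, in the form used in the converse of Theorem 1.) Let Z_1, ..., Z_N be random variables on a common probability space, each taking values in a finite set, and let 1 ≤ ℓ ≤ N. Then (1 / C(N,ℓ)) · ∑_{L ⊆ {1,...,N}, |L| = ℓ} H(Z_L)/ℓ ≥ H(Z_1, ..., Z_N)/N, where C(N,ℓ) is the binomial coefficient and Z_L = (Z_i)_{i ∈ L}. -/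
/-!
Han's inequality follows from the chain rule together with the fact that conditioning reduces
entropy. Write `h S` for the entropy of `(Z_i)_{i ∈ S}` and let
`c i = h {j | j ≤ i} - h {j | j < i}`, the conditional entropy of `Z_i` given its predecessors.
Submodularity of `h` (`Hent_submodular`, an instance of `log t ≤ t - 1`) says that conditioning on
fewer variables increases the conditional entropy, so adding the elements of `S` in increasing
order gives `h S ≥ ∑ i ∈ S, c i` (`sum_increment_le`), while the `c i` telescope to `h univ`.
Each `i` lies in `(N - 1).choose (ℓ - 1)` subsets of size `ℓ`, so summing over these subsets yields
`∑ h L ≥ (N - 1).choose (ℓ - 1) * h univ`, and `N * (N - 1).choose (ℓ - 1) = ℓ * N.choose ℓ`.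
-/

open MeasureTheory ProbabilityTheory

section Entropy

variable {Ω : Type*} [MeasurableSpace Ω] (μ : Measure Ω) [IsProbabilityMeasure μ]

/-- The entropy of a function `g` of `V` as an expectation over the values of `V`. -/
lemma Hent_comp {α β : Type*} [Fintype α] [Fintype β] (V : Ω → β)
    (hV : ∀ b, MeasurableSet (V ⁻¹' {b})) (g : β → α) :
    Hent μ (fun ω => g (V ω)) =
      - ∑ b, μ.real (V ⁻¹' {b}) * Real.log (μ.real ((fun ω => g (V ω)) ⁻¹' {g b})) := by
  classical
  have key : ∀ a, μ.real ((fun ω => g (V ω)) ⁻¹' {a})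
      = ∑ b with g b = a, μ.real (V ⁻¹' {b}) := by
    intro a
    rw [sum_measureReal_preimage_singleton _ (fun b _ => hV b)]
    congr 1
    ext ω
    simp
  unfold Hent
  congr 1
  rw [← Finset.sum_fiberwise (s := Finset.univ) (g := g)]
  refine Finset.sum_congr rfl fun a _ => ?_
  change μ.real _ * Real.log (μ.real _) = _
  nth_rw 1 [key a]
  rw [Finset.sum_mul]
  refine Finset.sum_congr rfl fun b hb => ?_
  rw [(Finset.mem_filter.mp hb).2]

lemma Hent_comp_injective {α β : Type*} [Fintype α] [Fintype β] (V : Ω → β)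
    (hV : ∀ b, MeasurableSet (V ⁻¹' {b})) (g : β → α) (hg : Function.Injective g) :
    Hent μ (fun ω => g (V ω)) = Hent μ V := by
  rw [Hent_comp μ V hV g]
  unfold Hent
  congr 1
  refine Finset.sum_congr rfl fun b _ => ?_
  have : (fun ω => g (V ω)) ⁻¹' {g b} = V ⁻¹' {b} := by
    ext ω
    simp [hg.eq_iff]
  rw [this]
  rfl

/-- Conditioning on less information increases entropy: `H(W | Y) ≤ H(W | f(Y))`, written
without conditional entropies. -/
lemma Hent_submodular {α β γ : Type*} [Fintype α] [Fintype β] [Fintype γ]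
    (Y : Ω → β) (W : Ω → γ) (hY : ∀ b, MeasurableSet (Y ⁻¹' {b}))
    (hW : ∀ c, MeasurableSet (W ⁻¹' {c})) (f : β → α) :
    Hent μ (fun ω => (Y ω, W ω)) + Hent μ (fun ω => f (Y ω)) ≤
      Hent μ (fun ω => (f (Y ω), W ω)) + Hent μ Y := by
  classical
  have hpre : ∀ (d : α) (c : γ),
      (fun ω => (f (Y ω), W ω)) ⁻¹' {(d, c)} = (fun ω => f (Y ω)) ⁻¹' {d} ∩ W ⁻¹' {c} := by
    intro d c
    ext ω
    simp
  have hV : ∀ b : β × γ, MeasurableSet ((fun ω => (Y ω, W ω)) ⁻¹' {b}) := by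
    rintro ⟨b, c⟩
    have : (fun ω => (Y ω, W ω)) ⁻¹' {(b, c)} = Y ⁻¹' {b} ∩ W ⁻¹' {c} := by
      ext ω
      simp
    rw [this]
    exact (hY b).inter (hW c)
  -- summing out `W` from a joint law
  have marg : ∀ A : Set Ω, ∑ c, μ.real (A ∩ W ⁻¹' {c}) = μ.real A := by
    intro A
    have := sum_measureReal_preimage_singleton (μ := μ.restrict A) (f := W) Finset.univ
      (fun c _ => hW c)
    simp only [Finset.coe_univ, Set.preimage_univ, measureReal_restrict_apply_univ] at this
    rw [← this]
    refine Finset.sum_congr rfl fun c _ => ?_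
    rw [measureReal_restrict_apply (hW c), Set.inter_comm]
  have e1 := Hent_comp μ _ hV (fun p => p)
  have e2 := Hent_comp μ _ hV (fun p => f p.1)
  have e3 := Hent_comp μ _ hV (fun p => (f p.1, p.2))
  have e4 := Hent_comp μ _ hV (fun p => p.1)
  dsimp only at e1 e2 e3 e4
  change Hent μ Y = _ at e4
  rw [e1, e2, e3, e4]
  have point : ∀ p : β × γ,
      μ.real ((fun ω => (Y ω, W ω)) ⁻¹' {p}) *
          Real.log (μ.real ((fun ω => (f (Y ω), W ω)) ⁻¹' {(f p.1, p.2)}))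
        + μ.real ((fun ω => (Y ω, W ω)) ⁻¹' {p}) * Real.log (μ.real (Y ⁻¹' {p.1}))
        - μ.real ((fun ω => (Y ω, W ω)) ⁻¹' {p}) *
          Real.log (μ.real ((fun ω => (Y ω, W ω)) ⁻¹' {p}))
        - μ.real ((fun ω => (Y ω, W ω)) ⁻¹' {p}) *
          Real.log (μ.real ((fun ω => f (Y ω)) ⁻¹' {f p.1}))
      ≤ μ.real ((fun ω => (f (Y ω), W ω)) ⁻¹' {(f p.1, p.2)}) * μ.real (Y ⁻¹' {p.1})
          / μ.real ((fun ω => f (Y ω)) ⁻¹' {f p.1})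
        - μ.real ((fun ω => (Y ω, W ω)) ⁻¹' {p}) := by
    rintro ⟨y, w⟩
    dsimp only
    have h1 : μ.real ((fun ω => (Y ω, W ω)) ⁻¹' {(y, w)})
        ≤ μ.real ((fun ω => (f (Y ω), W ω)) ⁻¹' {(f y, w)}) :=
      measureReal_mono (by intro ω; simp +contextual)
    have h2 : μ.real ((fun ω => (Y ω, W ω)) ⁻¹' {(y, w)}) ≤ μ.real (Y ⁻¹' {y}) :=
      measureReal_mono (by intro ω; simp +contextual)
    have h3 : μ.real ((fun ω => (Y ω, W ω)) ⁻¹' {(y, w)})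
        ≤ μ.real ((fun ω => f (Y ω)) ⁻¹' {f y}) :=
      measureReal_mono (by intro ω; simp +contextual)
    have h0 : 0 ≤ μ.real ((fun ω => (Y ω, W ω)) ⁻¹' {(y, w)}) := measureReal_nonneg
    generalize μ.real ((fun ω => (Y ω, W ω)) ⁻¹' {(y, w)}) = q at *
    generalize μ.real ((fun ω => (f (Y ω), W ω)) ⁻¹' {(f y, w)}) = a at *
    generalize μ.real (Y ⁻¹' {y}) = b at *
    generalize μ.real ((fun ω => f (Y ω)) ⁻¹' {f y}) = c at *
    rcases h0.eq_or_lt with rfl | hq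
    · simp only [zero_mul, add_zero, sub_zero]
      positivity
    · have ha := hq.trans_le h1
      have hb := hq.trans_le h2
      have hc := hq.trans_le h3
      have hlog := Real.log_le_sub_one_of_pos (x := a * b / (q * c)) (by positivity)
      rw [Real.log_div (by positivity) (by positivity), Real.log_mul ha.ne' hb.ne',
        Real.log_mul hq.ne' hc.ne'] at hlog
      have hmul := mul_le_mul_of_nonneg_left hlog hq.le
      have : q * (a * b / (q * c) - 1) = a * b / c - q := by field_simp
      rw [this] at hmul
      linarith
  have hsum := Finset.sum_le_sum (s := Finset.univ) fun p _ => point p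
  simp only [Finset.sum_sub_distrib, Finset.sum_add_distrib] at hsum
  have hone : ∑ p, μ.real ((fun ω => (Y ω, W ω)) ⁻¹' {p}) = 1 := by
    rw [sum_measureReal_preimage_singleton _ (fun b _ => hV b)]
    simp
  have hle : ∑ p : β × γ, μ.real ((fun ω => (f (Y ω), W ω)) ⁻¹' {(f p.1, p.2)})
      * μ.real (Y ⁻¹' {p.1}) / μ.real ((fun ω => f (Y ω)) ⁻¹' {f p.1}) ≤ 1 := by
    rw [Fintype.sum_prod_type]
    have hY1 : ∑ y, μ.real (Y ⁻¹' {y}) = 1 := by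
      rw [sum_measureReal_preimage_singleton _ (fun b _ => hY b)]
      simp
    rw [← hY1]
    refine Finset.sum_le_sum fun y _ => ?_
    dsimp only
    simp_rw [hpre, mul_div_assoc]
    rw [← Finset.sum_mul, marg]
    -- only an inequality: the quotient is zero when `f(Y) = f y` has probability zero
    by_cases hc : μ.real ((fun ω => f (Y ω)) ⁻¹' {f y}) = 0
    · rw [hc, zero_mul]
      exact measureReal_nonneg
    · exact (mul_div_cancel₀ _ hc).le
  linarith

end Entropy

/-- A set function whose increment at `a` over any `S ⊆ Iio a` dominates its increment over
`Iio a` dominates the sum of the latter increments. -/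
lemma sum_increment_le {N : ℕ} (h : Finset (Fin N) → ℝ) (h0 : h ∅ = 0)
    (hsub : ∀ a (S : Finset (Fin N)), S ⊆ Finset.Iio a →
      h (Finset.Iic a) - h (Finset.Iio a) ≤ h (insert a S) - h S) (S : Finset (Fin N)) :
    ∑ i ∈ S, (h (Finset.Iic i) - h (Finset.Iio i)) ≤ h S := by
  induction S using Finset.induction_on_max with
  | empty => simp [h0]
  | insert a S hS ih =>
    rw [Finset.sum_insert (fun ha => lt_irrefl _ (hS a ha))]
    have := hsub a S (fun x hx => Finset.mem_Iio.mpr (hS x hx))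
    linarith

lemma sum_increment_univ {N : ℕ} (h : Finset (Fin N) → ℝ) (h0 : h ∅ = 0) :
    ∑ i, (h (Finset.Iic i) - h (Finset.Iio i)) = h Finset.univ := by
  have e : ∀ i : Fin N, h (Finset.Iic i) - h (Finset.Iio i) =
      (fun k : ℕ => h {j | j.val < k + 1} - h {j | j.val < k}) i.val := by
    intro i
    dsimp only
    congr 2 <;> ext j <;> simp
  rw [Finset.sum_congr rfl fun i _ => e i,
    Fin.sum_univ_eq_sum_range (fun k : ℕ => h {j | j.val < k + 1} - h {j | j.val < k}) N,
    Finset.sum_range_sub (fun k : ℕ => h {j | j.val < k})]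
  simp [h0]

/-- Double counting: each element of `Fin (n + 1)` lies in `n.choose k` subsets of size `k + 1`. -/
lemma sum_powersetCard_sum {n k : ℕ} (c : Fin (n + 1) → ℝ) :
    ∑ L ∈ Finset.powersetCard (k + 1) (Finset.univ : Finset (Fin (n + 1))), ∑ i ∈ L, c i
      = (n.choose k : ℝ) * ∑ i, c i := by
  have hcount : ∀ i : Fin (n + 1),
      ((Finset.powersetCard (k + 1) (Finset.univ : Finset (Fin (n + 1)))).filter
        (fun L => i ∈ L)).card = n.choose k := by
    intro i
    have : (Finset.powersetCard k (Finset.univ.erase i)).card = n.choose k := by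
      simp
    rw [← this]
    refine Finset.card_bij' (fun L _ => L.erase i) (fun L _ => insert i L) ?_ ?_ ?_ ?_
    · intro L hL
      simp only [Finset.mem_filter, Finset.mem_powersetCard] at hL ⊢
      exact ⟨Finset.erase_subset_erase i hL.1.1, by
        rw [Finset.card_erase_of_mem hL.2, hL.1.2]; rfl⟩
    · intro L hL
      simp only [Finset.mem_filter, Finset.mem_powersetCard] at hL ⊢
      have hi : i ∉ L := fun hi => Finset.notMem_erase i _ (hL.1 hi)
      exact ⟨⟨Finset.subset_univ _, by rw [Finset.card_insert_of_notMem hi, hL.2]⟩,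
        Finset.mem_insert_self _ _⟩
    · intro L hL
      exact Finset.insert_erase (Finset.mem_filter.mp hL).2
    · intro L hL
      have hL := Finset.mem_powersetCard.mp hL
      exact Finset.erase_insert fun hi => Finset.notMem_erase i _ (hL.1 hi)
  calc _ = ∑ L ∈ Finset.powersetCard (k + 1) (Finset.univ : Finset (Fin (n + 1))),
        ∑ i, if i ∈ L then c i else 0 := by simp
    _ = _ := by
      rw [Finset.sum_comm, Finset.mul_sum]
      refine Finset.sum_congr rfl fun i _ => ?_
      rw [← Finset.sum_filter, Finset.sum_const, hcount, nsmul_eq_mul]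

/-- Han's inequality in the averaged form used in the converse of Theorem 1:
the average over all `ℓ`-subsets `L` of `H(Z_L)/ℓ` is at least `H(Z₁,…,Z_N)/N`. -/
theorem han_inequality
    {Ω : Type*} [MeasurableSpace Ω] (μ : Measure Ω) [IsProbabilityMeasure μ]
    {N ℓ : ℕ} (hℓ : 1 ≤ ℓ) (hN : ℓ ≤ N)
    {ζ : Fin N → Type*} [∀ i, Fintype (ζ i)] [∀ i, MeasurableSpace (ζ i)]
    [∀ i, MeasurableSingletonClass (ζ i)]
    (Z : ∀ i, Ω → ζ i) (hZ : ∀ i, Measurable (Z i)) :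
    (1 / (N.choose ℓ : ℝ)) *
        ∑ L ∈ Finset.powersetCard ℓ (Finset.univ : Finset (Fin N)),
          Hent μ (fun ω => fun i : L => Z i.1 ω) / (ℓ : ℝ)
      ≥ Hent μ (fun ω => fun i => Z i ω) / (N : ℝ) := by
  obtain ⟨k, rfl⟩ : ∃ k, ℓ = k + 1 := ⟨ℓ - 1, by omega⟩
  obtain ⟨n, rfl⟩ : ∃ n, N = n + 1 := ⟨N - 1, by omega⟩
  let h : Finset (Fin (n + 1)) → ℝ := fun S => Hent μ (fun ω => fun i : S => Z i.1 ω)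
  have hmeas : ∀ (S : Finset (Fin (n + 1))) (z : ∀ i : S, ζ i.1),
      MeasurableSet ((fun ω => fun i : S => Z i.1 ω) ⁻¹' {z}) := fun S z =>
    (measurable_pi_lambda _ fun i => hZ i.1) (MeasurableSet.singleton z)
  have h0 : h ∅ = 0 := by
    have : ∀ z : (∀ i : (∅ : Finset (Fin (n + 1))), ζ i.1),
        (fun ω => fun i : (∅ : Finset (Fin (n + 1))) => Z i.1 ω) ⁻¹' {z} = Set.univ := by
      intro z
      ext ω
      simp only [Set.mem_preimage, Set.mem_singleton_iff, Set.mem_univ, iff_true]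
      exact Subsingleton.elim _ _
    simp only [h, Hent, this]
    simp
  have huniv : h Finset.univ = Hent μ (fun ω => fun i => Z i ω) :=
    Hent_comp_injective μ (fun ω => fun i => Z i ω)
      (fun z => (measurable_pi_lambda _ hZ) (MeasurableSet.singleton z))
      (fun z => fun i : (Finset.univ : Finset (Fin (n + 1))) => z i.1)
      (fun z z' hz => funext fun i => congrFun hz ⟨i, Finset.mem_univ i⟩)
  -- `Z_{insert a S}` carries the same information as the pair `(Z_S, Z_a)`
  have hins : ∀ a (S : Finset (Fin (n + 1))),
      h (insert a S) = Hent μ (fun ω => ((fun i : S => Z i.1 ω), Z a ω)) := by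
    intro a S
    refine (Hent_comp_injective μ (fun ω => fun i : (insert a S : Finset _) => Z i.1 ω)
      (hmeas _)
      (fun z => ((fun i : S => z ⟨i.1, Finset.mem_insert_of_mem i.2⟩),
        z ⟨a, Finset.mem_insert_self a S⟩)) ?_).symm
    intro z z' hz
    rw [Prod.mk.injEq] at hz
    funext ⟨i, hi⟩
    rcases Finset.mem_insert.mp hi with rfl | hi'
    · exact hz.2
    · exact congrFun hz.1 ⟨i, hi'⟩
  have hsub : ∀ a (S : Finset (Fin (n + 1))), S ⊆ Finset.Iio a →
      h (Finset.Iic a) - h (Finset.Iio a) ≤ h (insert a S) - h S := by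
    intro a S hS
    rw [← Finset.Iio_insert a, hins, hins]
    have := Hent_submodular μ (fun ω => fun i : (Finset.Iio a) => Z i.1 ω) (Z a) (hmeas _)
      (fun c => hZ a (MeasurableSet.singleton c))
      (fun z => fun i : S => z ⟨i.1, hS i.2⟩)
    dsimp only [h] at this ⊢
    linarith
  have hmain : (n.choose k : ℝ) * h Finset.univ ≤
      ∑ L ∈ Finset.powersetCard (k + 1) (Finset.univ : Finset (Fin (n + 1))), h L := by
    rw [← sum_increment_univ h h0, ← sum_powersetCard_sum]
    exact Finset.sum_le_sum fun L _ => sum_increment_le h h0 hsub L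
  rw [← Finset.sum_div, ← huniv, ge_iff_le]
  change _ ≤ _ * ((∑ L ∈ _, h L) / _)
  have hchoose : ((n + 1 : ℕ) : ℝ) * (n.choose k : ℝ)
      = ((n + 1).choose (k + 1) : ℝ) * ((k + 1 : ℕ) : ℝ) := by
    exact_mod_cast Nat.add_one_mul_choose_eq n k
  have hpos : (0 : ℝ) < ((n + 1).choose (k + 1) : ℝ) := by
    exact_mod_cast Nat.choose_pos hN
  have hk : (0 : ℝ) < ((k + 1 : ℕ) : ℝ) := by positivity
  have hn : (0 : ℝ) < ((n + 1 : ℕ) : ℝ) := by positivity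
  rw [one_div_mul_eq_div, div_div, div_le_div_iff₀ hn (by positivity), mul_comm ((k + 1 : ℕ) : ℝ),
    ← hchoose]
  nlinarith [mul_le_mul_of_nonneg_left hmain hn.le]
end

section
/- Let F be a field, N > ℓ ≥ 1 and a, n ≥ 1 integers, and let x_{i_1}, ..., x_{i_ℓ} be distinct nonzero elements of F. Fix matrices A_1, ..., A_{N−ℓ} ∈ F^{a×n}. Then the map sending a key tuple (K_1, ..., K_ℓ) ∈ (F^{a×n})^ℓ to the share tuple (Ã(x_{i_1}), ..., Ã(x_{i_ℓ})), where Ã(x) = ∑_{j=1}^{N−ℓ} A_j x^{j−1} + ∑_{k=1}^{ℓ} K_k x^{k+(N−ℓ)−1}, is a bijection from (F^{a×n})^ℓ to (F^{a×n})^ℓ. -/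
/-!
The map is affine in the keys, so it suffices that its linear part is bijective. The linear part is
an endomorphism of the finite-dimensional space `(F^{a×n})^ℓ`, so injectivity is enough. Entry by
entry, an element of the kernel is killed by the matrix `(x_t ^ (k + (N - ℓ)))`, which is an
invertible diagonal matrix times the Vandermonde matrix of `x`: each row may be divided by the
nonzero factor `x_t ^ (N - ℓ)`, and distinctness of the points makes the Vandermonde system
nonsingular.
-/

/-- Bijectivity of the key-to-shares map for the one-sided secure scheme: for any fixed
blocks `A₁, …, A_{N-ℓ}` and distinct nonzero evaluation points `x_{i₁}, …, x_{i_ℓ}`, the map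
`(K₁, …, K_ℓ) ↦ (Ã(x_{i₁}), …, Ã(x_{i_ℓ}))`, where
`Ã(x) = ∑_{j=1}^{N-ℓ} A_j x^{j-1} + ∑_{k=1}^{ℓ} K_k x^{k+(N-ℓ)-1}`, is a bijection from
`(F^{a×n})^ℓ` to itself. -/
theorem one_sided_key_bijective
    {F : Type*} [Field F] {N ℓ a n : ℕ}
    (hℓ : 1 ≤ ℓ) (hN : ℓ < N) (ha : 1 ≤ a) (hn : 1 ≤ n)
    (x : Fin ℓ → F) (hx : Function.Injective x) (hx0 : ∀ t, x t ≠ 0)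
    (A : Fin (N - ℓ) → Matrix (Fin a) (Fin n) F) :
    Function.Bijective (fun K : Fin ℓ → Matrix (Fin a) (Fin n) F =>
      fun t : Fin ℓ =>
        (∑ j : Fin (N - ℓ), x t ^ (j : ℕ) • A j)
          + ∑ k : Fin ℓ, x t ^ ((k : ℕ) + (N - ℓ)) • K k) := by
  let L : (Fin ℓ → Matrix (Fin a) (Fin n) F) →ₗ[F] (Fin ℓ → Matrix (Fin a) (Fin n) F) :=
    LinearMap.pi fun t => ∑ k : Fin ℓ, x t ^ ((k : ℕ) + (N - ℓ)) • LinearMap.proj k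
  have hL : ∀ K t, L K t = ∑ k : Fin ℓ, x t ^ ((k : ℕ) + (N - ℓ)) • K k := by
    intro K t
    simp [L]
  have hinj : Function.Injective L := by
    rw [← LinearMap.ker_eq_bot, LinearMap.ker_eq_bot']
    intro K hK
    funext k
    ext p q
    have hvec : (fun k : Fin ℓ => K k p q) = 0 := by
      refine Matrix.eq_zero_of_forall_index_sum_pow_mul_eq_zero hx fun t => ?_
      have ht : ∑ k : Fin ℓ, x t ^ ((k : ℕ) + (N - ℓ)) * K k p q = 0 := by
        have h := congrFun (congrFun (congrFun hK t) p) q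
        rw [hL] at h
        simpa [Matrix.sum_apply] using h
      -- cancel the common nonzero factor of row `t`
      refine (mul_eq_zero.mp ?_).resolve_left (pow_ne_zero (N - ℓ) (hx0 t))
      rw [← ht, Finset.mul_sum]
      exact Finset.sum_congr rfl fun k _ => by ring
    exact congrFun hvec k
  have hbij : Function.Bijective L := ⟨hinj, LinearMap.injective_iff_surjective.mp hinj⟩
  have hcomp := (Equiv.addLeft
    (fun t : Fin ℓ => ∑ j : Fin (N - ℓ), x t ^ (j : ℕ) • A j)).bijective.comp hbij
  convert hcomp using 1
  funext K t
  simp [hL]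
end

section
/- Let F be a finite field, N > ℓ ≥ 1 and a, n ≥ 1 integers, and let x_{i_1}, ..., x_{i_ℓ} be distinct nonzero elements of F. Let A be a random variable taking values in (F^{a×n})^{N−ℓ} (the tuple of blocks A_1, ..., A_{N−ℓ}), and let K = (K_1, ..., K_ℓ) be uniformly distributed on (F^{a×n})^{ℓ} and independent of A. Define the shares Ã_{i_t} = ∑_{j=1}^{N−ℓ} A_j x_{i_t}^{j−1} + ∑_{k=1}^{ℓ} K_k x_{i_t}^{k+(N−ℓ)−1} for t = 1, ..., ℓ. Then I(A ; (Ã_{i_1}, ..., Ã_{i_ℓ})) = 0, i.e., the ℓ colluding servers' shares are independent of A. -/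
/-!
For a fixed value `α` of `A`, the map sending the keys to the shares is a translate of the linear
map with matrix `(x_t ^ (k + (N - ℓ)))`, applied entrywise. This matrix is the Vandermonde matrix
of the distinct points `x_t` with row `t` rescaled by `x_t ^ (N - ℓ) ≠ 0`, so the map is injective
(`keyPart_injective`) and hence, its domain and codomain being the same finite set, bijective.
A uniform key independent of `A` then acts as a one-time pad: conditionally on each `A = α` the
shares are uniform, so the joint law of `A` and the shares is the product of the law of `A` with
the uniform law (`mutInfo_oneTimePad`). For a product law the entropies add (`mutInfo_eq_zero`).
-/

open MeasureTheory ProbabilityTheory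

instance matrixMeasurableSpace {m n α : Type*} [MeasurableSpace α] :
    MeasurableSpace (Matrix m n α) := by unfold Matrix; infer_instance

instance matrixMeasurableSingletonClass {m n α : Type*} [Countable m] [Countable n]
    [Countable α] [MeasurableSpace α] [MeasurableSingletonClass α] :
    MeasurableSingletonClass (Matrix m n α) := by
  unfold Matrix matrixMeasurableSpace; infer_instance

/-- Mutual information vanishes when the joint law is a product; the total masses of the two
marginals are hypotheses, so that no measurability of `X` and `Y` is needed. -/
lemma mutInfo_eq_zero {Ω : Type*} [MeasurableSpace Ω] (μ : Measure Ω)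
    {α β : Type*} [Fintype α] [Fintype β] (X : Ω → α) (Y : Ω → β)
    (hX : ∑ a, (μ (X ⁻¹' {a})).toReal = 1) (hY : ∑ b, (μ (Y ⁻¹' {b})).toReal = 1)
    (h : ∀ a b, μ (X ⁻¹' {a} ∩ Y ⁻¹' {b}) = μ (X ⁻¹' {a}) * μ (Y ⁻¹' {b})) :
    mutInfo μ X Y = 0 := by
  have hpre : ∀ a b, (fun ω => (X ω, Y ω)) ⁻¹' {(a, b)} = X ⁻¹' {a} ∩ Y ⁻¹' {b} := by
    intro a b
    ext ω
    simp
  have key : ∀ p q : ℝ, (p * q) * Real.log (p * q)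
      = q * (p * Real.log p) + p * (q * Real.log q) := by
    intro p q
    have := Real.negMulLog_mul p q
    simp only [Real.negMulLog] at this
    linarith
  unfold mutInfo Hent
  rw [Fintype.sum_prod_type]
  simp only [hpre, h, ENNReal.toReal_mul, key, Finset.sum_add_distrib, ← Finset.sum_mul,
    ← Finset.mul_sum, hX, hY]
  ring

/-- If `K` is uniform and independent of `X`, and each `f a` is a bijection, then `f X K` carries
no information about `X`. -/
lemma mutInfo_oneTimePad {Ω : Type*} [MeasurableSpace Ω] (μ : Measure Ω) [IsProbabilityMeasure μ]
    {α κ β : Type*} [Fintype α] [Fintype κ] [Fintype β]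
    [MeasurableSpace α] [MeasurableSingletonClass α]
    [MeasurableSpace κ] [MeasurableSingletonClass κ] [Nonempty κ]
    (X : Ω → α) (K : Ω → κ) (hX : Measurable X)
    (hunif : ∀ k, μ (K ⁻¹' {k}) = (Fintype.card κ : ENNReal)⁻¹) (hindep : IndepFun X K μ)
    (f : α → κ → β) (hf : ∀ a, Function.Bijective (f a)) :
    mutInfo μ X (fun ω => f (X ω) (K ω)) = 0 := by
  have hXm : ∀ a, MeasurableSet (X ⁻¹' {a}) := fun a => hX (measurableSet_singleton a)
  have hXsum : ∑ a, μ (X ⁻¹' {a}) = 1 := by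
    rw [sum_measure_preimage_singleton _ fun a _ => hXm a]
    simp
  have hjoint : ∀ a b, μ (X ⁻¹' {a} ∩ (fun ω => f (X ω) (K ω)) ⁻¹' {b})
      = μ (X ⁻¹' {a}) * (Fintype.card κ : ENNReal)⁻¹ := by
    intro a b
    obtain ⟨k, rfl⟩ := (hf a).2 b
    have hset : X ⁻¹' {a} ∩ (fun ω => f (X ω) (K ω)) ⁻¹' {f a k} = X ⁻¹' {a} ∩ K ⁻¹' {k} := by
      ext ω
      simp only [Set.mem_inter_iff, Set.mem_preimage, Set.mem_singleton_iff]
      refine and_congr_right fun h => ?_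
      rw [h, (hf a).1.eq_iff]
    rw [hset, hindep.measure_inter_preimage_eq_mul _ _ (measurableSet_singleton a)
      (measurableSet_singleton k), hunif]
  have hY : ∀ b, μ ((fun ω => f (X ω) (K ω)) ⁻¹' {b}) = (Fintype.card κ : ENNReal)⁻¹ := by
    intro b
    -- Restricting `μ` to the event `f X K = b` avoids any measurability requirement on it.
    have h := sum_measure_preimage_singleton (μ := μ.restrict ((fun ω => f (X ω) (K ω)) ⁻¹' {b}))
      Finset.univ (f := X) fun a _ => hXm a
    simp only [Measure.restrict_apply (hXm _), hjoint, ← Finset.sum_mul, hXsum, one_mul,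
      Finset.coe_univ, Set.preimage_univ, Measure.restrict_apply_univ] at h
    exact h.symm
  refine mutInfo_eq_zero μ X _ ?_ ?_ fun a b => by rw [hjoint, hY]
  · rw [← ENNReal.toReal_sum fun a _ => measure_ne_top _ _, hXsum, ENNReal.toReal_one]
  · obtain ⟨ω⟩ := nonempty_of_isProbabilityMeasure μ
    have hcard : Fintype.card β = Fintype.card κ := (Fintype.card_of_bijective (hf (X ω))).symm
    simp [hY, hcard]

/-- The key part of the shares determines the keys: a rescaled Vandermonde system with distinct
nonzero nodes has only one solution. -/
lemma keyPart_injective {F : Type*} [Field F] {ℓ a n : ℕ} (m : ℕ)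
    (x : Fin ℓ → F) (hx : Function.Injective x) (hx0 : ∀ t, x t ≠ 0) :
    Function.Injective (fun (K : Fin ℓ → Matrix (Fin a) (Fin n) F) (t : Fin ℓ) =>
      ∑ k : Fin ℓ, x t ^ ((k : ℕ) + m) • K k) := by
  intro K L h
  have hz : ∀ i j, (fun k => K k i j - L k i j) = 0 := by
    intro i j
    refine Matrix.eq_zero_of_forall_index_sum_pow_mul_eq_zero hx fun t => ?_
    have ht := congrFun (congrFun (congrFun h t) i) j
    simp only [Matrix.sum_apply, Matrix.smul_apply, smul_eq_mul] at ht
    refine (mul_eq_zero.mp ?_).resolve_left (pow_ne_zero m (hx0 t))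
    rw [← sub_eq_zero, ← Finset.sum_sub_distrib] at ht
    rw [Finset.mul_sum, ← ht]
    refine Finset.sum_congr rfl fun k _ => ?_
    ring
  ext k i j
  exact sub_eq_zero.mp (congrFun (hz i j) k)

/-- Security of the one-sided secure scheme (equation (4)): if the key tuple
`K = (K₁, …, K_ℓ)` is uniform and independent of the block tuple `A = (A₁, …, A_{N-ℓ})`,
then the shares `Ã_{i_t} = ∑_j A_j x_{i_t}^{j-1} + ∑_k K_k x_{i_t}^{k+(N-ℓ)-1}` of any
`ℓ` colluding servers (with distinct nonzero evaluation points) satisfy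
`I(A ; (Ã_{i₁}, …, Ã_{i_ℓ})) = 0`. -/
theorem one_sided_scheme_secure
    {F : Type*} [Field F] [Fintype F] [MeasurableSpace F] [MeasurableSingletonClass F]
    {N ℓ a n : ℕ} (hℓ : 1 ≤ ℓ) (hN : ℓ < N) (ha : 1 ≤ a) (hn : 1 ≤ n)
    (x : Fin ℓ → F) (hx : Function.Injective x) (hx0 : ∀ t, x t ≠ 0)
    {Ω : Type*} [MeasurableSpace Ω] (μ : Measure Ω) [IsProbabilityMeasure μ]
    (A : Ω → (Fin (N - ℓ) → Matrix (Fin a) (Fin n) F))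
    (K : Ω → (Fin ℓ → Matrix (Fin a) (Fin n) F))
    (hA : Measurable A) (hK : Measurable K)
    (hunif : ∀ k : Fin ℓ → Matrix (Fin a) (Fin n) F,
      μ (K ⁻¹' {k}) = (Fintype.card (Fin ℓ → Matrix (Fin a) (Fin n) F) : ENNReal)⁻¹)
    (hindep : IndepFun A K μ) :
    mutInfo μ A (fun ω => fun t : Fin ℓ =>
      (∑ j : Fin (N - ℓ), x t ^ (j : ℕ) • A ω j)
        + ∑ k : Fin ℓ, x t ^ ((k : ℕ) + (N - ℓ)) • K ω k) = 0 := by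
  refine mutInfo_oneTimePad μ A K hA hunif hindep
    (fun α κ t => (∑ j : Fin (N - ℓ), x t ^ (j : ℕ) • α j)
      + ∑ k : Fin ℓ, x t ^ ((k : ℕ) + (N - ℓ)) • κ k) fun α => ?_
  refine Finite.injective_iff_bijective.mp fun κ κ' h => ?_
  exact keyPart_injective (N - ℓ) x hx hx0 (funext fun t => add_left_cancel (congrFun h t))
end

section
/- (Theorem 1, achievability, as an existence statement.) Let N > ℓ ≥ 1 be integers, let F be a field with at least N + 1 elements, and let m, n, p ≥ 1 with (N − ℓ) dividing m; write a = m/(N − ℓ). Then there exist encoding functions f_i : F^{m×n} × (F^{a×n})^{ℓ} → F^{a×n} for i = 1, ..., N and a decoding function d : (F^{a×p})^{N} → F^{m×p} such that: (decodability) for every A ∈ F^{m×n}, every B ∈ F^{n×p}, and every key tuple K ∈ (F^{a×n})^{ℓ}, d(f_1(A,K)·B, ..., f_N(A,K)·B) = A·B; and (security) for every subset L ⊆ {1,...,N} with |L| = ℓ and every A ∈ F^{m×n}, the map K ↦ (f_i(A,K))_{i∈L} is a bijection from (F^{a×n})^{ℓ} to (F^{a×n})^{ℓ}. -/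
/-!
The scheme is secret sharing with a Vandermonde code. Cut `A` into `N - ℓ` blocks of `a` rows each
and fix distinct points `x i` of `F`, one per server. Server `i` receives the value at `x i` of the
polynomial whose coefficients of degree `< ℓ` are the keys and whose coefficients of degrees
`ℓ, …, N - 1` are the blocks of `A`.

Multiplication by `B` on the right commutes with this linear combination, so inverting the `N × N`
Vandermonde matrix recovers every block of `A * B`. For a set `L` of `ℓ` servers, the shares are
an affine function of the keys whose linear part is the `ℓ × ℓ` Vandermonde matrix of the points of
`L`; it is invertible, hence the bijection. Both parts rest on `sum_inv_smul_sum_smul`.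
-/

/-- Scalar matrices act on tuples of elements of a module compatibly with products, so a left
inverse `P` of `Q` undoes the action of `Q`. -/
lemma sum_inv_smul_sum_smul {F M ι κ : Type*} [Field F] [AddCommGroup M] [Module F M]
    [Fintype ι] [Fintype κ] [DecidableEq ι]
    (P : Matrix ι κ F) (Q : Matrix κ ι F) (h : P * Q = 1) (W : ι → M) (j : ι) :
    ∑ k, P j k • ∑ l, Q k l • W l = W j := by
  simp_rw [Finset.smul_sum, smul_smul]
  rw [Finset.sum_comm]
  simp_rw [← Finset.sum_smul, ← Matrix.mul_apply, h, Matrix.one_apply]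
  simp

lemma vandermonde_isUnit_det {F : Type*} [Field F] {k : ℕ} (x : Fin k → F)
    (hx : Function.Injective x) : IsUnit (Matrix.vandermonde x).det :=
  isUnit_iff_ne_zero.2 (Matrix.det_vandermonde_ne_zero_iff.2 hx)

/-- Theorem 1, achievability, as an existence statement: for `N > ℓ ≥ 1`, a field `F`
with at least `N + 1` elements, and `(N - ℓ) ∣ m` with `a = m / (N - ℓ)`, there exist
encodings `fᵢ : F^{m×n} × (F^{a×n})^ℓ → F^{a×n}` and a decoder
`d : (F^{a×p})^N → F^{m×p}` such that `d` recovers `A·B` from the server answers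
`fᵢ(A,K)·B`, and for every `ℓ`-subset `L` of servers and every `A`, the map
`K ↦ (fᵢ(A,K))_{i∈L}` is a bijection of `(F^{a×n})^ℓ` (so the colluding shares reveal
nothing about `A`). -/
theorem one_sided_scheme_exists
    {F : Type*} [Field F] {N ℓ m n p : ℕ}
    (hℓ : 1 ≤ ℓ) (hN : ℓ < N) (hm : 1 ≤ m) (hn : 1 ≤ n) (hp : 1 ≤ p)
    (hF : ∃ e : Fin (N + 1) → F, Function.Injective e)
    (hdvd : (N - ℓ) ∣ m) :
    ∃ (f : Fin N → Matrix (Fin m) (Fin n) F →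
          (Fin ℓ → Matrix (Fin (m / (N - ℓ))) (Fin n) F) →
          Matrix (Fin (m / (N - ℓ))) (Fin n) F)
      (d : (Fin N → Matrix (Fin (m / (N - ℓ))) (Fin p) F) → Matrix (Fin m) (Fin p) F),
      (∀ (A : Matrix (Fin m) (Fin n) F) (B : Matrix (Fin n) (Fin p) F)
          (K : Fin ℓ → Matrix (Fin (m / (N - ℓ))) (Fin n) F),
          d (fun i => f i A K * B) = A * B) ∧
      (∀ L : Finset (Fin N), L.card = ℓ →
        ∀ A : Matrix (Fin m) (Fin n) F,
          Function.Bijective (fun K : Fin ℓ → Matrix (Fin (m / (N - ℓ))) (Fin n) F =>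
            fun i : L => f i.1 A K)) := by
  obtain ⟨e, he⟩ := hF
  -- Only `N` of the `N + 1` available points are needed.
  let x : Fin N → F := fun i => e i.castSucc
  have hx : Function.Injective x := he.comp (Fin.castSucc_injective N)
  let rows : Fin (N - ℓ) × Fin (m / (N - ℓ)) ≃ Fin m :=
    finProdFinEquiv.trans (finCongr (Nat.mul_div_cancel' hdvd))
  -- Exponents: `inl j` is the degree `j` of a key, `inr j` the degree `ℓ + j` of a block of `A`.
  let deg : Fin ℓ ⊕ Fin (N - ℓ) ≃ Fin N :=
    finSumFinEquiv.trans (finCongr (by omega))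
  let V : Matrix (Fin N) (Fin ℓ ⊕ Fin (N - ℓ)) F :=
    (Matrix.vandermonde x).submatrix id deg
  let V' : Matrix (Fin ℓ ⊕ Fin (N - ℓ)) (Fin N) F :=
    (Matrix.vandermonde x)⁻¹.submatrix deg id
  have hV : V' * V = 1 := by
    have h := Matrix.submatrix_mul_equiv (Matrix.vandermonde x)⁻¹ (Matrix.vandermonde x)
      deg (Equiv.refl (Fin N)) deg
    rw [Matrix.nonsing_inv_mul _ (vandermonde_isUnit_det x hx), Matrix.submatrix_one_equiv] at h
    exact h
  let blk : Matrix (Fin m) (Fin n) F → Fin (N - ℓ) → Matrix (Fin (m / (N - ℓ))) (Fin n) F :=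
    fun A j => Matrix.of fun s c => A (rows (j, s)) c
  refine ⟨fun i A K => ∑ s, V i s • Sum.elim K (blk A) s,
    fun Y => Matrix.of fun r c =>
      (∑ i, V' (Sum.inr (rows.symm r).1) i • Y i) (rows.symm r).2 c, ?_, ?_⟩
  · intro A B K
    ext r c
    simp only [Matrix.of_apply, Matrix.sum_mul, Matrix.smul_mul]
    rw [sum_inv_smul_sum_smul V' V hV (fun s => Sum.elim K (blk A) s * B)]
    simp [Matrix.mul_apply, blk]
  · intro L hL A
    let g : L ≃ Fin ℓ := L.equivFinOfCardEq hL
    let y : Fin ℓ → F := fun k => x (g.symm k).1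
    have hy : Function.Injective y :=
      hx.comp (Subtype.val_injective.comp g.symm.injective)
    have hU := vandermonde_isUnit_det y hy
    let U := Matrix.vandermonde y
    -- The contribution of `A` to the shares; it does not depend on the keys.
    let C : L → Matrix (Fin (m / (N - ℓ))) (Fin n) F :=
      fun i => ∑ j, V i.1 (Sum.inr j) • blk A j
    have key : ∀ (K : Fin ℓ → Matrix (Fin (m / (N - ℓ))) (Fin n) F) (i : L),
        ∑ s, V i.1 s • Sum.elim K (blk A) s = ∑ j, U (g i) j • K j + C i := by
      intro K i
      rw [Fintype.sum_sum_type]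
      simp [C, V, U, y, deg, Matrix.vandermonde_apply]
    simp only [key]
    rw [Function.bijective_iff_has_inverse]
    refine ⟨fun Y j => ∑ k, U⁻¹ j k • (Y (g.symm k) - C (g.symm k)), fun K => ?_, fun Y => ?_⟩
    · funext j
      simp only [add_sub_cancel_right, Equiv.apply_symm_apply]
      exact sum_inv_smul_sum_smul U⁻¹ U (Matrix.nonsing_inv_mul _ hU) K j
    · funext i
      simp only []
      rw [sum_inv_smul_sum_smul U U⁻¹ (Matrix.mul_nonsing_inv _ hU)
        (fun k => Y (g.symm k) - C (g.symm k)) (g i)]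
      simp
end

section
/- Let F be a field and r, ℓ ≥ 1 integers. Let A_1, ..., A_r, K_{A_1}, ..., K_{A_ℓ} ∈ F^{a×n} and B_1, ..., B_r, K_{B_1}, ..., K_{B_ℓ} ∈ F^{n×b}, and define the matrix-coefficient polynomials Ã(x) = ∑_{j=1}^{r} A_j x^{j−1} + ∑_{k=1}^{ℓ} K_{A_k} x^{k+r−1} and B̃(x) = ∑_{j'=1}^{r} B_{j'} x^{(j'−1)(r+ℓ)} + ∑_{k=1}^{ℓ} K_{B_k} x^{(k+r−1)(r+ℓ)}. Then the product polynomial h(x) = Ã(x)·B̃(x) has degree at most (r+ℓ)² − 1, and for all 1 ≤ j, j' ≤ r, the coefficient of x^{(j−1) + (j'−1)(r+ℓ)} in h equals exactly A_j·B_{j'} (no other term of the product contributes to that degree). -/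
/-!
With `N = r + ℓ`, concatenating data and key blocks turns the two encodings into
`Ã = ∑_{p < N} P_p x^p` and `B̃ = ∑_{q < N} Q_q x^{qN}`. Hence
`Ã B̃ = ∑_{p, q < N} P_p Q_q x^{p + qN}`, and by uniqueness of base-`N` expansions the exponents
`p + qN` are pairwise distinct and at most `N² - 1`. So every coefficient is a single product
`P_p Q_q`, which is `A_j B_{j'}` when both indices lie in the data range.
-/

open Polynomial

/-- The fully secure encoding polynomial for the `A` side, as a matrix with polynomial
entries: `Ã(x) = ∑_{j=1}^{r} A_j x^{j-1} + ∑_{k=1}^{ℓ} K_{A_k} x^{k+r-1}`. -/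
noncomputable def encApoly {F : Type*} [Field F] {a n r ℓ : ℕ}
    (A : Fin r → Matrix (Fin a) (Fin n) F) (KA : Fin ℓ → Matrix (Fin a) (Fin n) F) :
    Matrix (Fin a) (Fin n) (Polynomial F) :=
  (∑ j : Fin r, (X ^ (j : ℕ) : Polynomial F) • (A j).map C)
    + ∑ k : Fin ℓ, (X ^ ((k : ℕ) + r) : Polynomial F) • (KA k).map C

/-- The fully secure encoding polynomial for the `B` side:
`B̃(x) = ∑_{j'=1}^{r} B_{j'} x^{(j'-1)(r+ℓ)} + ∑_{k=1}^{ℓ} K_{B_k} x^{(k+r-1)(r+ℓ)}`. -/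
noncomputable def encBpoly {F : Type*} [Field F] {n b r ℓ : ℕ}
    (B : Fin r → Matrix (Fin n) (Fin b) F) (KB : Fin ℓ → Matrix (Fin n) (Fin b) F) :
    Matrix (Fin n) (Fin b) (Polynomial F) :=
  (∑ j : Fin r, (X ^ ((j : ℕ) * (r + ℓ)) : Polynomial F) • (B j).map C)
    + ∑ k : Fin ℓ, (X ^ (((k : ℕ) + r) * (r + ℓ)) : Polynomial F) • (KB k).map C

theorem encApoly_apply {F : Type*} [Field F] {a n r ℓ : ℕ}
    (A : Fin r → Matrix (Fin a) (Fin n) F) (KA : Fin ℓ → Matrix (Fin a) (Fin n) F)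
    (i : Fin a) (m : Fin n) :
    encApoly A KA i m = ∑ p : Fin (r + ℓ), monomial (p : ℕ) (Fin.append A KA p i m) := by
  simp [encApoly, Fin.sum_univ_add, Matrix.add_apply, Matrix.sum_apply, X_pow_mul_C,
    C_mul_X_pow_eq_monomial, add_comm]

theorem encBpoly_apply {F : Type*} [Field F] {n b r ℓ : ℕ}
    (B : Fin r → Matrix (Fin n) (Fin b) F) (KB : Fin ℓ → Matrix (Fin n) (Fin b) F)
    (m : Fin n) (i' : Fin b) :
    encBpoly B KB m i' =
      ∑ q : Fin (r + ℓ), monomial ((q : ℕ) * (r + ℓ)) (Fin.append B KB q m i') := by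
  simp [encBpoly, Fin.sum_univ_add, Matrix.add_apply, Matrix.sum_apply, X_pow_mul_C,
    C_mul_X_pow_eq_monomial, add_comm]

theorem encApoly_mul_encBpoly_apply {F : Type*} [Field F] {a n b r ℓ : ℕ}
    (A : Fin r → Matrix (Fin a) (Fin n) F) (KA : Fin ℓ → Matrix (Fin a) (Fin n) F)
    (B : Fin r → Matrix (Fin n) (Fin b) F) (KB : Fin ℓ → Matrix (Fin n) (Fin b) F)
    (i : Fin a) (i' : Fin b) :
    (encApoly A KA * encBpoly B KB) i i' =
      ∑ m : Fin n, ∑ p : Fin (r + ℓ), ∑ q : Fin (r + ℓ),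
        monomial ((p : ℕ) + (q : ℕ) * (r + ℓ))
          (Fin.append A KA p i m * Fin.append B KB q m i') := by
  simp only [Matrix.mul_apply, encApoly_apply, encBpoly_apply, Finset.sum_mul_sum,
    monomial_mul_monomial]

/-- Uniqueness of two-digit expansions in base `N`. -/
theorem base_digits_eq_iff {N : ℕ} (p q s t : Fin N) :
    (p : ℕ) + (q : ℕ) * N = (s : ℕ) + (t : ℕ) * N ↔ p = s ∧ q = t := by
  constructor
  · intro h
    have hN : 0 < N := p.pos
    have h1 := congrArg (· % N) h
    have h2 := congrArg (· / N) h
    simp only [Nat.add_mul_mod_self_right, Nat.mod_eq_of_lt p.2, Nat.mod_eq_of_lt s.2] at h1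
    simp only [Nat.add_mul_div_right _ _ hN, Nat.div_eq_of_lt p.2, Nat.div_eq_of_lt s.2,
      zero_add] at h2
    exact ⟨Fin.ext h1, Fin.ext h2⟩
  · rintro ⟨rfl, rfl⟩
    rfl

/-- Every exponent `s + tN` with digits `s, t < N` carries a single product of blocks, whether
data or key. -/
theorem coeff_encApoly_mul_encBpoly {F : Type*} [Field F] {a n b r ℓ : ℕ}
    (A : Fin r → Matrix (Fin a) (Fin n) F) (KA : Fin ℓ → Matrix (Fin a) (Fin n) F)
    (B : Fin r → Matrix (Fin n) (Fin b) F) (KB : Fin ℓ → Matrix (Fin n) (Fin b) F)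
    (i : Fin a) (i' : Fin b) (s t : Fin (r + ℓ)) :
    ((encApoly A KA * encBpoly B KB) i i').coeff ((s : ℕ) + (t : ℕ) * (r + ℓ)) =
      (Fin.append A KA s * Fin.append B KB t) i i' := by
  rw [encApoly_mul_encBpoly_apply, Matrix.mul_apply]
  simp [finsetSum_coeff, coeff_monomial, base_digits_eq_iff, ite_and]

/-- Degree separation in the fully secure scheme (equation (20)): the product polynomial
`h(x) = Ã(x)·B̃(x)` has degree at most `(r+ℓ)² - 1`, and for all `1 ≤ j, j' ≤ r` the
coefficient of `x^{(j-1)+(j'-1)(r+ℓ)}` in `h` is exactly `A_j·B_{j'}` (no other term of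
the product contributes to that degree). -/
theorem fully_secure_degree_separation
    {F : Type*} [Field F] {a n b r ℓ : ℕ} (hr : 1 ≤ r) (hℓ : 1 ≤ ℓ)
    (A : Fin r → Matrix (Fin a) (Fin n) F) (KA : Fin ℓ → Matrix (Fin a) (Fin n) F)
    (B : Fin r → Matrix (Fin n) (Fin b) F) (KB : Fin ℓ → Matrix (Fin n) (Fin b) F) :
    (∀ (i : Fin a) (i' : Fin b),
        ((encApoly A KA * encBpoly B KB) i i').natDegree ≤ (r + ℓ) ^ 2 - 1) ∧
      (∀ j j' : Fin r,
        (Matrix.of fun i i' =>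
            ((encApoly A KA * encBpoly B KB) i i').coeff ((j : ℕ) + (j' : ℕ) * (r + ℓ)))
          = A j * B j') := by
  refine ⟨fun i i' => ?_, fun j j' => ?_⟩
  · rw [encApoly_mul_encBpoly_apply]
    refine natDegree_sum_le_of_forall_le _ _ fun m _ =>
      natDegree_sum_le_of_forall_le _ _ fun p _ =>
        natDegree_sum_le_of_forall_le _ _ fun q _ => (natDegree_monomial_le _).trans ?_
    -- `p + qN < (q + 1)N ≤ N²`, since both digits are below `N`.
    have hq : ((q : ℕ) + 1) * (r + ℓ) ≤ (r + ℓ) * (r + ℓ) := Nat.mul_le_mul_right _ q.2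
    have hp := p.2
    rw [pow_two]
    rw [Nat.add_mul, one_mul] at hq
    omega
  · ext i i'
    simpa using coeff_encApoly_mul_encBpoly A KA B KB i i' (Fin.castAdd ℓ j) (Fin.castAdd ℓ j')
end

section
/- Let F be a field, r, ℓ ≥ 1 integers, and x_1, ..., x_{(r+ℓ)²} distinct elements of F. Let (A_1,...,A_r, K_{A_1},...,K_{A_ℓ}, B_1,...,B_r, K_{B_1},...,K_{B_ℓ}) and (A'_1,...,A'_r, K'_{A_1},...,K'_{A_ℓ}, B'_1,...,B'_r, K'_{B_1},...,K'_{B_ℓ}) be two families of matrices of matching sizes with corresponding encoding polynomials Ã, B̃ and Ã', B̃'. If Ã(x_i)·B̃(x_i) = Ã'(x_i)·B̃'(x_i) for all i = 1, ..., (r+ℓ)², then A_j·B_{j'} = A'_j·B'_{j'} for all 1 ≤ j, j' ≤ r. In particular, the r² desired products A_j·B_{j'} are uniquely determined by the (r+ℓ)² server answers. -/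
/-!
Put `N = r + ℓ` and append the keys to the data, giving families `P`, `Q` indexed by `Fin N` with
`Ã(x) = ∑ x ^ i • P i` and `B̃(x) = ∑ x ^ (i' * N) • Q i'`. Since `(i, i') ↦ i + i' * N` is a
bijection onto `{0, …, N² - 1}` (base-`N` expansion), `Ã(x) * B̃(x)` is a polynomial with `N²`
coefficients, and each coefficient is a single product `P i * Q i'`
(`sum_mul_sum_eq_sum_prodCoeff`). Values at `N²` distinct points determine these coefficients by
the Vandermonde argument (`coeff_eq_of_eval_eq`); the products `A j * B j'` are among them.
-/

/-- The fully secure encoding polynomial for the `A` side, evaluated at `x`: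
`Ã(x) = ∑_{j=1}^{r} A_j x^{j-1} + ∑_{k=1}^{ℓ} K_{A_k} x^{k+r-1}`. -/
def encA {F : Type*} [Field F] {a n r ℓ : ℕ}
    (A : Fin r → Matrix (Fin a) (Fin n) F) (KA : Fin ℓ → Matrix (Fin a) (Fin n) F)
    (x : F) : Matrix (Fin a) (Fin n) F :=
  (∑ j : Fin r, x ^ (j : ℕ) • A j) + ∑ k : Fin ℓ, x ^ ((k : ℕ) + r) • KA k

/-- The fully secure encoding polynomial for the `B` side, evaluated at `x`:
`B̃(x) = ∑_{j'=1}^{r} B_{j'} x^{(j'-1)(r+ℓ)} + ∑_{k=1}^{ℓ} K_{B_k} x^{(k+r-1)(r+ℓ)}`. -/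
def encB {F : Type*} [Field F] {n b r ℓ : ℕ}
    (B : Fin r → Matrix (Fin n) (Fin b) F) (KB : Fin ℓ → Matrix (Fin n) (Fin b) F)
    (x : F) : Matrix (Fin n) (Fin b) F :=
  (∑ j : Fin r, x ^ ((j : ℕ) * (r + ℓ)) • B j) + ∑ k : Fin ℓ, x ^ (((k : ℕ) + r) * (r + ℓ)) • KB k

theorem encA_eq_sum_append {F : Type*} [Field F] {a n r ℓ : ℕ}
    (A : Fin r → Matrix (Fin a) (Fin n) F) (KA : Fin ℓ → Matrix (Fin a) (Fin n) F) (x : F) :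
    encA A KA x = ∑ i : Fin (r + ℓ), x ^ (i : ℕ) • Fin.append A KA i := by
  simp [encA, Fin.sum_univ_add, add_comm]

theorem encB_eq_sum_append {F : Type*} [Field F] {n b r ℓ : ℕ}
    (B : Fin r → Matrix (Fin n) (Fin b) F) (KB : Fin ℓ → Matrix (Fin n) (Fin b) F) (x : F) :
    encB B KB x = ∑ i : Fin (r + ℓ), x ^ ((i : ℕ) * (r + ℓ)) • Fin.append B KB i := by
  simp [encB, Fin.sum_univ_add, add_comm]

/-- The coefficient of `x ^ t` in the product polynomial, where `t = i + i' * N` is split into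
its base-`N` digits: `finProdFinEquiv.symm t = (i', i)`, high digit first. -/
def prodCoeff {F : Type*} [Field F] {a n b N : ℕ}
    (P : Fin N → Matrix (Fin a) (Fin n) F) (Q : Fin N → Matrix (Fin n) (Fin b) F)
    (t : Fin (N * N)) : Matrix (Fin a) (Fin b) F :=
  P (finProdFinEquiv.symm t).2 * Q (finProdFinEquiv.symm t).1

/-- No two pairs `(i, i')` contribute to the same power of `x`, so the product is a polynomial
with `N * N` coefficients, each of them a single product `P i * Q i'`. -/
theorem sum_mul_sum_eq_sum_prodCoeff {F : Type*} [Field F] {a n b N : ℕ}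
    (P : Fin N → Matrix (Fin a) (Fin n) F) (Q : Fin N → Matrix (Fin n) (Fin b) F) (x : F) :
    (∑ i : Fin N, x ^ (i : ℕ) • P i) * (∑ i : Fin N, x ^ ((i : ℕ) * N) • Q i) =
      ∑ t : Fin (N * N), x ^ (t : ℕ) • prodCoeff P Q t := by
  rw [← finProdFinEquiv.sum_comp, Fintype.sum_prod_type, Finset.sum_comm, Matrix.sum_mul]
  refine Finset.sum_congr rfl fun i _ => ?_
  rw [Matrix.mul_sum]
  refine Finset.sum_congr rfl fun i' _ => ?_
  simp only [prodCoeff, Equiv.symm_apply_apply, finProdFinEquiv_apply_val, Matrix.smul_mul,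
    Matrix.mul_smul, smul_smul, pow_add, mul_comm N]
  rw [mul_comm]

/-- Matrix-valued polynomials with `M` coefficients that agree at `M` distinct points are equal:
entrywise, this is invertibility of the Vandermonde matrix. -/
theorem coeff_eq_of_eval_eq {F : Type*} [Field F] {a b M : ℕ} {x : Fin M → F}
    (hx : Function.Injective x) {C C' : Fin M → Matrix (Fin a) (Fin b) F}
    (h : ∀ i, ∑ t : Fin M, x i ^ (t : ℕ) • C t = ∑ t : Fin M, x i ^ (t : ℕ) • C' t) :
    C = C' := by
  funext t
  ext p q
  have hz : (fun s => C s p q - C' s p q) = 0 := by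
    refine Matrix.eq_zero_of_forall_index_sum_pow_mul_eq_zero hx fun i => ?_
    have hi := congrFun (congrFun (h i) p) q
    simp only [Matrix.sum_apply, Matrix.smul_apply, smul_eq_mul] at hi
    simp only [mul_sub, Finset.sum_sub_distrib, hi, sub_self]
  exact sub_eq_zero.mp (congrFun hz t)

/-- Decodability of the fully secure scheme: if the `(r+ℓ)²` server answers
`Ã(xᵢ)·B̃(xᵢ)` at distinct evaluation points agree for two families of matrices, then the
corresponding desired products agree: the `r²` products `A_j·B_{j'}` are uniquely
determined by the `(r+ℓ)²` answers. -/
theorem fully_secure_decodability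
    {F : Type*} [Field F] {a n b r ℓ : ℕ} (hr : 1 ≤ r) (hℓ : 1 ≤ ℓ)
    (x : Fin ((r + ℓ) ^ 2) → F) (hx : Function.Injective x)
    (A A' : Fin r → Matrix (Fin a) (Fin n) F) (KA KA' : Fin ℓ → Matrix (Fin a) (Fin n) F)
    (B B' : Fin r → Matrix (Fin n) (Fin b) F) (KB KB' : Fin ℓ → Matrix (Fin n) (Fin b) F)
    (h : ∀ i : Fin ((r + ℓ) ^ 2),
      encA A KA (x i) * encB B KB (x i) = encA A' KA' (x i) * encB B' KB' (x i)) :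
    ∀ j j' : Fin r, A j * B j' = A' j * B' j' := by
  intro j j'
  have hC : prodCoeff (Fin.append A KA) (Fin.append B KB) =
      prodCoeff (Fin.append A' KA') (Fin.append B' KB') := by
    -- `(r + ℓ) ^ 2` and `(r + ℓ) * (r + ℓ)` index the points by different `Fin` types.
    refine coeff_eq_of_eval_eq (x := x ∘ Fin.cast (sq (r + ℓ)).symm)
      (hx.comp (Fin.cast_injective _)) fun i => ?_
    have hi := h (Fin.cast (sq (r + ℓ)).symm i)
    simpa only [encA_eq_sum_append, encB_eq_sum_append, sum_mul_sum_eq_sum_prodCoeff,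
      Function.comp_apply] using hi
  have ht := congrFun hC (finProdFinEquiv (Fin.castAdd ℓ j', Fin.castAdd ℓ j))
  simpa only [prodCoeff, Equiv.symm_apply_apply, Fin.append_left] using ht
end

section
/- Let F be a field, r, ℓ ≥ 1 integers, and let x_{i_1}, ..., x_{i_ℓ} be nonzero elements of F such that the powers x_{i_1}^{r+ℓ}, ..., x_{i_ℓ}^{r+ℓ} are pairwise distinct (which implies the x_{i_t} themselves are pairwise distinct). Fix matrices A_1, ..., A_r ∈ F^{a×n} and B_1, ..., B_r ∈ F^{n×b}. Then the map sending ((K_{A_1},...,K_{A_ℓ}), (K_{B_1},...,K_{B_ℓ})) ∈ (F^{a×n})^ℓ × (F^{n×b})^ℓ to the share tuple ((Ã(x_{i_1}),...,Ã(x_{i_ℓ})), (B̃(x_{i_1}),...,B̃(x_{i_ℓ}))) is a bijection from (F^{a×n})^ℓ × (F^{n×b})^ℓ onto itself. -/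
/-- The linear map `K ↦ (∑ k, M t k • K k)_t` on tuples from an `F`-module, followed by a
translation, is bijective if `M` is invertible: `M⁻¹` acts in the same way as the inverse. -/
theorem bijective_affine_of_isUnit_det {F V : Type*} [Field F] [AddCommGroup V] [Module F V]
    {ℓ : ℕ} (M : Matrix (Fin ℓ) (Fin ℓ) F) (hM : IsUnit M.det) (c : Fin ℓ → V) :
    Function.Bijective (fun K : Fin ℓ → V => fun t => c t + ∑ k, M t k • K k) := by
  have act : ∀ (P Q : Matrix (Fin ℓ) (Fin ℓ) F), P * Q = 1 → ∀ (K : Fin ℓ → V) (t : Fin ℓ),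
      ∑ k, P t k • ∑ s, Q k s • K s = K t := by
    intro P Q hPQ K t
    simp only [Finset.smul_sum, smul_smul]
    rw [Finset.sum_comm]
    simp only [← Finset.sum_smul, ← Matrix.mul_apply, hPQ, Matrix.one_apply, ite_smul,
      one_smul, zero_smul, Finset.sum_ite_eq, Finset.mem_univ, if_true]
  refine Function.bijective_iff_has_inverse.mpr
    ⟨fun S t => ∑ k, M⁻¹ t k • (S k - c k), fun K => ?_, fun S => ?_⟩
  · funext t
    simpa using act _ _ (Matrix.nonsing_inv_mul M hM) K t
  · funext t
    have h := act _ _ (Matrix.mul_nonsing_inv M hM) (fun k => S k - c k) t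
    simp only [h, add_sub_cancel]

theorem isUnit_det_shifted_vandermonde {F : Type*} [Field F] {ℓ : ℕ} (r : ℕ) (y : Fin ℓ → F)
    (hy0 : ∀ t, y t ≠ 0) (hy : Function.Injective y) :
    IsUnit (Matrix.of fun t k : Fin ℓ => y t ^ ((k : ℕ) + r)).det := by
  have h : (Matrix.of fun t k : Fin ℓ => y t ^ ((k : ℕ) + r))
      = Matrix.diagonal (fun t => y t ^ r) * Matrix.vandermonde y := by
    ext t k
    simp [Matrix.diagonal_mul, Matrix.vandermonde_apply, pow_add, mul_comm]
  rw [h, Matrix.det_mul, Matrix.det_diagonal, isUnit_iff_ne_zero]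
  exact mul_ne_zero (Finset.prod_ne_zero_iff.mpr fun t _ => pow_ne_zero _ (hy0 t))
    (Matrix.det_vandermonde_ne_zero_iff.mpr hy)

/-- Bijectivity of the key-to-shares map for the fully secure scheme: for fixed blocks
`A₁, …, A_r`, `B₁, …, B_r` and nonzero points `x_{i₁}, …, x_{i_ℓ}` whose `(r+ℓ)`-th powers
are pairwise distinct, the map
`((K_{A₁},…,K_{A_ℓ}), (K_{B₁},…,K_{B_ℓ})) ↦ ((Ã(x_{i₁}),…,Ã(x_{i_ℓ})), (B̃(x_{i₁}),…,B̃(x_{i_ℓ})))`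
is a bijection of `(F^{a×n})^ℓ × (F^{n×b})^ℓ` onto itself. -/
theorem fully_secure_key_bijective
    {F : Type*} [Field F] {a n b r ℓ : ℕ} (hr : 1 ≤ r) (hℓ : 1 ≤ ℓ)
    (x : Fin ℓ → F) (hx0 : ∀ t, x t ≠ 0)
    (hx : Function.Injective fun t => x t ^ (r + ℓ))
    (A : Fin r → Matrix (Fin a) (Fin n) F) (B : Fin r → Matrix (Fin n) (Fin b) F) :
    Function.Bijective
      (fun KK : (Fin ℓ → Matrix (Fin a) (Fin n) F) × (Fin ℓ → Matrix (Fin n) (Fin b) F) =>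
        ((fun t : Fin ℓ => encA A KK.1 (x t)), (fun t : Fin ℓ => encB B KK.2 (x t)))) := by
  have hxinj : Function.Injective x := fun s t h => hx (congrArg (· ^ (r + ℓ)) h)
  have hA := bijective_affine_of_isUnit_det _
    (isUnit_det_shifted_vandermonde r x hx0 hxinj)
    (fun t => ∑ j : Fin r, x t ^ (j : ℕ) • A j)
  have hB := bijective_affine_of_isUnit_det _
    (isUnit_det_shifted_vandermonde r (fun t => x t ^ (r + ℓ))
      (fun t => pow_ne_zero _ (hx0 t)) hx)
    (fun t => ∑ j : Fin r, x t ^ ((j : ℕ) * (r + ℓ)) • B j)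
  convert hA.prodMap hB using 1
  funext KK
  -- The exponents on the `B` side agree by `x ^ ((k + r) * (r + ℓ)) = (x ^ (r + ℓ)) ^ (k + r)`.
  simp only [encA, encB, Prod.map, Matrix.of_apply, ← pow_mul, mul_comm (r + ℓ)]
end

section
/- Let F be a finite field, r, ℓ ≥ 1 integers, and let x_{i_1}, ..., x_{i_ℓ} be nonzero elements of F such that x_{i_1}^{r+ℓ}, ..., x_{i_ℓ}^{r+ℓ} are pairwise distinct. Let (A, B) be a random variable taking values in (F^{a×n})^{r} × (F^{n×b})^{r}, and let the key tuple K = ((K_{A_1},...,K_{A_ℓ}), (K_{B_1},...,K_{B_ℓ})) be uniformly distributed on (F^{a×n})^ℓ × (F^{n×b})^ℓ and independent of (A, B). Define the shares Ã_{i_t} = ∑_{j=1}^{r} A_j x_{i_t}^{j−1} + ∑_{k=1}^{ℓ} K_{A_k} x_{i_t}^{k+r−1} and B̃_{i_t} = ∑_{j'=1}^{r} B_{j'} x_{i_t}^{(j'−1)(r+ℓ)} + ∑_{k=1}^{ℓ} K_{B_k} x_{i_t}^{(k+r−1)(r+ℓ)} for t = 1, ..., ℓ. Then I((A,B) ; (Ã_{i_1},...,Ã_{i_ℓ},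 B̃_{i_1},...,B̃_{i_ℓ})) = 0. -/
/-!
The scheme is a one-time pad. For fixed data `(A, B)`, the map from keys to shares is an affine map
between spaces of equal finite size. Its linear part is, entry by entry, a Vandermonde matrix (in the
nodes `x_t` on the `A` side, `x_t ^ (r + ℓ)` on the `B` side) with its rows scaled by nonzero factors,
so it is injective (`keyMap_injective`) and hence bijective. A uniform key independent of the data
therefore makes the shares uniform conditionally on every value of the data
(`measure_inter_preimage_pad`), so the joint law of data and shares is a product law, whose mutual
information vanishes (`mutInfo_eq_zero_of_mul`).
-/

open MeasureTheory ProbabilityTheory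

/-- Mutual information vanishes when the joint law is the product of the law of `X` and a probability
mass function `q`, which is then necessarily the law of `Y`. -/
lemma mutInfo_eq_zero_of_mul {Ω : Type*} [MeasurableSpace Ω] (μ : Measure Ω)
    [IsProbabilityMeasure μ] {α β : Type*} [Fintype α] [Fintype β]
    [MeasurableSpace α] [MeasurableSingletonClass α]
    (X : Ω → α) (Y : Ω → β) (hX : Measurable X) (q : β → ENNReal)
    (hq : ∑ y, (q y).toReal = 1)
    (h : ∀ x y, μ (X ⁻¹' {x} ∩ Y ⁻¹' {y}) = μ (X ⁻¹' {x}) * q y) :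
    mutInfo μ X Y = 0 := by
  have hXm : ∀ x, MeasurableSet (X ⁻¹' {x}) := fun x => hX (measurableSet_singleton x)
  have hsum : ∑ x, μ (X ⁻¹' {x}) = 1 := by
    rw [sum_measure_preimage_singleton _ fun x _ => hXm x]
    simp
  have hp : ∑ x, (μ (X ⁻¹' {x})).toReal = 1 := by
    rw [← ENNReal.toReal_sum fun x _ => measure_ne_top _ _, hsum, ENNReal.toReal_one]
  have hY : ∀ y, μ (Y ⁻¹' {y}) = q y := by
    intro y
    -- The marginal of `Y` at `y` is the total mass of `μ` restricted to `Y = y`, split along `X`.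
    have h1 := sum_measure_preimage_singleton (μ := μ.restrict (Y ⁻¹' {y})) Finset.univ
      (f := X) fun x _ => hXm x
    simp only [Measure.restrict_apply (hXm _), h, ← Finset.sum_mul, hsum, one_mul] at h1
    simpa using h1.symm
  have hXY : ∀ z : α × β, μ ((fun ω => (X ω, Y ω)) ⁻¹' {z}) = μ (X ⁻¹' {z.1}) * q z.2 := by
    rintro ⟨x, y⟩
    rw [← h]
    congr 1
    ext ω
    simp
  have hneg : ∀ t : ℝ, t * Real.log t = -Real.negMulLog t := fun t => by
    simp [Real.negMulLog]
  simp only [mutInfo, Hent, hXY, hY, hneg, ENNReal.toReal_mul, Real.negMulLog_mul,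
    Fintype.sum_prod_type, Finset.sum_neg_distrib, Finset.sum_add_distrib, ← Finset.sum_mul,
    ← Finset.mul_sum, hp, hq]
  ring

/-- The one-time pad: a uniform key `K` independent of `X` makes `g X K` uniform conditionally on
`X`, provided that each `g x` permutes the key space. -/
lemma measure_inter_preimage_pad {Ω : Type*} [MeasurableSpace Ω] (μ : Measure Ω)
    {α κ : Type*} [MeasurableSpace α] [MeasurableSingletonClass α]
    [MeasurableSpace κ] [MeasurableSingletonClass κ]
    (X : Ω → α) (K : Ω → κ) (hindep : IndepFun X K μ) (c : ENNReal)
    (hunif : ∀ k, μ (K ⁻¹' {k}) = c) (g : α → κ → κ) (hg : ∀ x, Function.Bijective (g x))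
    (x : α) (y : κ) :
    μ (X ⁻¹' {x} ∩ (fun ω => g (X ω) (K ω)) ⁻¹' {y}) = μ (X ⁻¹' {x}) * c := by
  obtain ⟨k, rfl⟩ := (hg x).2 y
  rw [← hunif k, ← hindep.measure_inter_preimage_eq_mul _ _ (measurableSet_singleton x)
    (measurableSet_singleton k)]
  congr 1
  ext ω
  simp only [Set.mem_inter_iff, Set.mem_preimage, Set.mem_singleton_iff]
  refine and_congr_right fun hω => ?_
  rw [hω]
  exact (hg x).1.eq_iff

/-- The contribution of the keys to the shares is injective, by invertibility of the Vandermonde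
matrix of the nodes `y`; the offset `s` in the exponents only scales its rows. -/
lemma keyMap_injective {F : Type*} [Field F] {ℓ : ℕ} {m p : Type*} (s : ℕ) (y : Fin ℓ → F)
    (hy0 : ∀ t, y t ≠ 0) (hy : Function.Injective y) :
    Function.Injective fun (K : Fin ℓ → Matrix m p F) (t : Fin ℓ) =>
      ∑ k : Fin ℓ, y t ^ ((k : ℕ) + s) • K k := by
  intro K K' h
  have hdet : (Matrix.vandermonde y).det ≠ 0 := Matrix.det_vandermonde_ne_zero_iff.2 hy
  ext k i j
  have hv : (Matrix.vandermonde y).mulVec (fun k => K k i j - K' k i j) = 0 := by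
    ext t
    have ht := congrFun (congrFun (congrFun h t) i) j
    simp only [Matrix.sum_apply, Matrix.smul_apply, smul_eq_mul] at ht
    refine (mul_eq_zero.1 ?_).resolve_left (pow_ne_zero s (hy0 t))
    rw [← sub_eq_zero, ← Finset.sum_sub_distrib] at ht
    rw [← ht, Matrix.mulVec, dotProduct, Finset.mul_sum]
    refine Finset.sum_congr rfl fun k _ => ?_
    rw [Matrix.vandermonde_apply, pow_add]
    ring
  exact sub_eq_zero.1 (congrFun (Matrix.eq_zero_of_mulVec_eq_zero hdet hv) k)

lemma encA_injective {F : Type*} [Field F] {a n r ℓ : ℕ} (x : Fin ℓ → F) (hx0 : ∀ t, x t ≠ 0)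
    (hx : Function.Injective x) (A : Fin r → Matrix (Fin a) (Fin n) F) :
    Function.Injective fun (KA : Fin ℓ → Matrix (Fin a) (Fin n) F) t => encA A KA (x t) := by
  intro K K' h
  refine keyMap_injective r x hx0 hx (funext fun t => ?_)
  exact add_left_cancel (congrFun h t)

lemma encB_injective {F : Type*} [Field F] {n b r ℓ : ℕ} (x : Fin ℓ → F) (hx0 : ∀ t, x t ≠ 0)
    (hx : Function.Injective fun t => x t ^ (r + ℓ)) (B : Fin r → Matrix (Fin n) (Fin b) F) :
    Function.Injective fun (KB : Fin ℓ → Matrix (Fin n) (Fin b) F) t => encB B KB (x t) := by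
  intro K K' h
  refine keyMap_injective r (fun t => x t ^ (r + ℓ)) (fun t => pow_ne_zero _ (hx0 t)) hx
    (funext fun t => ?_)
  have ht := add_left_cancel (congrFun h t)
  simpa only [← pow_mul, mul_comm (r + ℓ)] using ht

/-- Security of the fully secure scheme (equations (6) and (23)): if the key tuple
`K = ((K_{A₁},…,K_{A_ℓ}), (K_{B₁},…,K_{B_ℓ}))` is uniform and independent of `(A, B)`,
and the nonzero points `x_{i₁}, …, x_{i_ℓ}` have pairwise distinct `(r+ℓ)`-th powers,
then `I((A,B) ; (Ã_{i₁},…,Ã_{i_ℓ}, B̃_{i₁},…,B̃_{i_ℓ})) = 0`. -/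
theorem fully_secure_scheme_secure
    {F : Type*} [Field F] [Fintype F] [MeasurableSpace F] [MeasurableSingletonClass F]
    {a n b r ℓ : ℕ} (hr : 1 ≤ r) (hℓ : 1 ≤ ℓ)
    (x : Fin ℓ → F) (hx0 : ∀ t, x t ≠ 0)
    (hx : Function.Injective fun t => x t ^ (r + ℓ))
    {Ω : Type*} [MeasurableSpace Ω] (μ : Measure Ω) [IsProbabilityMeasure μ]
    (AB : Ω → (Fin r → Matrix (Fin a) (Fin n) F) × (Fin r → Matrix (Fin n) (Fin b) F))
    (K : Ω → (Fin ℓ → Matrix (Fin a) (Fin n) F) × (Fin ℓ → Matrix (Fin n) (Fin b) F))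
    (hAB : Measurable AB) (hK : Measurable K)
    (hunif : ∀ k : (Fin ℓ → Matrix (Fin a) (Fin n) F) × (Fin ℓ → Matrix (Fin n) (Fin b) F),
      μ (K ⁻¹' {k}) =
        (Fintype.card ((Fin ℓ → Matrix (Fin a) (Fin n) F) ×
          (Fin ℓ → Matrix (Fin n) (Fin b) F)) : ENNReal)⁻¹)
    (hindep : IndepFun AB K μ) :
    mutInfo μ AB (fun ω =>
      ((fun t : Fin ℓ => encA (AB ω).1 (K ω).1 (x t)),
       (fun t : Fin ℓ => encB (AB ω).2 (K ω).2 (x t)))) = 0 := by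
  classical
  -- Distinct `(r + ℓ)`-th powers come from distinct points.
  have hxinj : Function.Injective x := fun s t hst => hx (congrArg (· ^ (r + ℓ)) hst)
  refine mutInfo_eq_zero_of_mul μ AB _ hAB
    (fun _ => (Fintype.card ((Fin ℓ → Matrix (Fin a) (Fin n) F) ×
          (Fin ℓ → Matrix (Fin n) (Fin b) F)) : ENNReal)⁻¹) ?_
    (measure_inter_preimage_pad μ AB K hindep _ hunif
      (fun D k => ((fun t => encA D.1 k.1 (x t)), (fun t => encB D.2 k.2 (x t)))) fun D => ?_)
  · rw [Finset.sum_const, Finset.card_univ, nsmul_eq_mul, ENNReal.toReal_inv,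
      ENNReal.toReal_natCast]
    exact mul_inv_cancel₀ (Nat.cast_ne_zero.2 Fintype.card_ne_zero)
  · exact Finite.injective_iff_bijective.1
      ((encA_injective x hx0 hxinj D.1).prodMap (encB_injective x hx0 hx D.2))
end

section
/- (Theorem 3, achievability, as an existence statement.) Let N > ℓ ≥ 1 and r ≥ 1 be integers with (r+ℓ)² ≤ N, let F be a field containing N nonzero elements x_1, ..., x_N whose (r+ℓ)-th powers x_1^{r+ℓ}, ..., x_N^{r+ℓ} are pairwise distinct, and let m, n, p ≥ 1 with r dividing m and r dividing p; write a = m/r and b = p/r. Then there exist encoding functions f_i : F^{m×n} × (F^{a×n})^{ℓ} → F^{a×n} and g_i : F^{n×p} × (F^{n×b})^{ℓ} → F^{n×b} for i = 1, ..., N, and a decoding function d : (F^{a×b})^{N} → F^{m×p}, such that: (decodability) for every A ∈ F^{m×n}, B ∈ F^{n×p} and every pair of key tuples K_A ∈ (F^{a×n})^{ℓ}, K_B ∈ (F^{n×b})^{ℓ}, d(f_1(A,K_A)·g_1(B,K_B), ..., f_N(A,K_A)·g_N(B,K_B)) = A·B; and (security) for every subset L ⊆ {1,...,N} with |L| = ℓ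 and every pair (A, B), the map (K_A, K_B) ↦ ((f_i(A,K_A))_{i∈L}, (g_i(B,K_B))_{i∈L}) is a bijection from (F^{a×n})^{ℓ} × (F^{n×b})^{ℓ} onto itself. -/
/-!
Put `s = r + ℓ`. Cut `A` into `r` row blocks `A_j` and `B` into `r` column blocks `B_k`, and append
the keys to these block lists. Server `i` receives `∑ j < s, x_i ^ j • A_j` and
`∑ k < s, (x_i ^ s) ^ k • B_k`. Their product is `∑ x_i ^ (j + s * k) • (A_j * B_k)`, the value at
`x_i` of a polynomial of degree less than `s ^ 2` in which each product `A_j * B_k` is the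
coefficient of its own monomial. As `s ^ 2 ≤ N` and the `x_i` are distinct, a Vandermonde inverse
recovers every coefficient (`exists_interpolation`), in particular all blocks of `A * B`.

For security, the shares of `ℓ` servers depend on the keys through a constant shift and the square
matrix `y_i ^ (r + k)`, with `y = x` or `y = x ^ s`. This is an invertible diagonal matrix times a
Vandermonde matrix at distinct nodes, hence invertible (`shares_bijective`).
-/

/-- The share `∑ j, y ^ j • M_j` where the list `M` consists of the `r` data blocks `A` followed by
the `ℓ` keys `K`. -/
def share {F V : Type*} [Field F] [AddCommGroup V] [Module F V] {r ℓ : ℕ}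
    (y : F) (A : Fin r → V) (K : Fin ℓ → V) : V :=
  ∑ j : Fin (r + ℓ), y ^ (j : ℕ) • Fin.append A K j

/-- Coefficients of a polynomial of degree less than `q` are fixed linear combinations of its values
at `N ≥ q` distinct points. -/
lemma exists_interpolation {F : Type*} [Field F] {N q : ℕ} (hq : q ≤ N) (x : Fin N → F)
    (hx : Function.Injective x) :
    ∃ c : Fin q → (Fin N → F) → F, ∀ (P : Fin q → F) (k : Fin q),
      c k (fun i => ∑ l : Fin q, x i ^ (l : ℕ) * P l) = P k := by
  set W : Matrix (Fin q) (Fin q) F := Matrix.vandermonde fun i => x (Fin.castLE hq i) with hW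
  have hdet : IsUnit W.det := by
    rw [isUnit_iff_ne_zero, hW, Matrix.det_vandermonde_ne_zero_iff]
    exact hx.comp (Fin.castLE_injective hq)
  refine ⟨fun k Y => W⁻¹.mulVec (fun i => Y (Fin.castLE hq i)) k, fun P k => ?_⟩
  have h : (fun i => ∑ l : Fin q, x (Fin.castLE hq i) ^ (l : ℕ) * P l) = W.mulVec P := by
    funext i
    simp [hW, Matrix.mulVec, dotProduct, Matrix.vandermonde_apply]
  simp only [h]
  rw [Matrix.mulVec_mulVec, Matrix.nonsing_inv_mul _ hdet, Matrix.one_mulVec]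

/-- For fixed data, the shares of any `ℓ` servers are in bijection with the keys. -/
lemma shares_bijective {F V : Type*} [Field F] [AddCommGroup V] [Module F V] {N r ℓ : ℕ}
    (y : Fin N → F) (hy0 : ∀ i, y i ≠ 0) (hy : Function.Injective y) (A : Fin r → V)
    (L : Finset (Fin N)) (hL : L.card = ℓ) :
    Function.Bijective (fun (K : Fin ℓ → V) (i : L) => share (y i.1) A K) := by
  let e : Fin ℓ ≃ L := (L.equivFinOfCardEq hL).symm
  let W : Matrix (Fin ℓ) (Fin ℓ) F :=
    Matrix.diagonal (fun t => y (e t).1 ^ r) * Matrix.vandermonde fun t => y (e t).1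
  have hdet : IsUnit W.det := by
    rw [isUnit_iff_ne_zero, Matrix.det_mul, Matrix.det_diagonal]
    refine mul_ne_zero (Finset.prod_ne_zero_iff.2 fun t _ => pow_ne_zero _ (hy0 _)) ?_
    rw [Matrix.det_vandermonde_ne_zero_iff]
    exact hy.comp (Subtype.val_injective.comp e.injective)
  have hWi : ∀ i j, ∑ k, W⁻¹ i k * W k j = if i = j then 1 else 0 := fun i j => by
    rw [← Matrix.mul_apply, Matrix.nonsing_inv_mul _ hdet, Matrix.one_apply]
  have hiW : ∀ i j, ∑ k, W i k * W⁻¹ k j = if i = j then 1 else 0 := fun i j => by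
    rw [← Matrix.mul_apply, Matrix.mul_nonsing_inv _ hdet, Matrix.one_apply]
  -- `C` is the contribution of the data, independent of the keys.
  let C : Fin ℓ → V := fun t => ∑ j : Fin r, y (e t).1 ^ (j : ℕ) • A j
  have hshare : ∀ (K : Fin ℓ → V) t, share (y (e t).1) A K = C t + ∑ k, W t k • K k := by
    intro K t
    simp [share, C, W, Fin.sum_univ_add, Matrix.diagonal_mul, Matrix.vandermonde_apply, pow_add]
  rw [Function.bijective_iff_has_inverse]
  refine ⟨fun T k => ∑ t, W⁻¹ k t • (T (e t) - C t), fun K => ?_, fun T => ?_⟩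
  · funext k
    simp only [hshare, add_sub_cancel_left, Finset.smul_sum, smul_smul]
    rw [Finset.sum_comm]
    simp [← Finset.sum_smul, hWi]
  · funext i
    obtain ⟨t, rfl⟩ := e.surjective i
    simp only [hshare, Finset.smul_sum, smul_smul]
    rw [Finset.sum_comm]
    simp [← Finset.sum_smul, hiW]

/-- The product of two shares, entrywise, is a polynomial in `x` whose monomials are indexed by the
pairs of blocks. -/
lemma share_mul_share_apply {F : Type*} [Field F] {r ℓ a n b : ℕ} (x : F)
    (A : Fin r → Matrix (Fin a) (Fin n) F) (KA : Fin ℓ → Matrix (Fin a) (Fin n) F)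
    (B : Fin r → Matrix (Fin n) (Fin b) F) (KB : Fin ℓ → Matrix (Fin n) (Fin b) F)
    (u : Fin a) (v : Fin b) :
    (share x A KA * share (x ^ (r + ℓ)) B KB) u v =
      ∑ l : Fin ((r + ℓ) * (r + ℓ)), x ^ (l : ℕ) *
        (Fin.append A KA (finProdFinEquiv.symm l).2 *
          Fin.append B KB (finProdFinEquiv.symm l).1) u v := by
  rw [← finProdFinEquiv.sum_comp, Fintype.sum_prod_type, share, share, Matrix.sum_mul,
    Matrix.sum_apply, Finset.sum_comm]
  refine Finset.sum_congr rfl fun j _ => ?_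
  rw [Matrix.mul_sum, Matrix.sum_apply]
  refine Finset.sum_congr rfl fun k _ => ?_
  simp only [Equiv.symm_apply_apply, finProdFinEquiv_apply_val, Matrix.smul_mul, Matrix.mul_smul,
    Matrix.smul_apply, smul_eq_mul, pow_add, pow_mul]
  ring

/-- Theorem 3, achievability, as an existence statement: for `N > ℓ ≥ 1`, `r ≥ 1` with
`(r+ℓ)² ≤ N`, a field `F` with `N` nonzero elements whose `(r+ℓ)`-th powers are pairwise
distinct, and `r ∣ m`, `r ∣ p` with `a = m/r`, `b = p/r`, there exist encodings
`fᵢ : F^{m×n} × (F^{a×n})^ℓ → F^{a×n}`, `gᵢ : F^{n×p} × (F^{n×b})^ℓ → F^{n×b}` and a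
decoder `d : (F^{a×b})^N → F^{m×p}` such that `d` recovers `A·B` from the server answers
`fᵢ(A,K_A)·gᵢ(B,K_B)`, and for every `ℓ`-subset `L` of servers and every pair `(A, B)`,
the map `(K_A, K_B) ↦ ((fᵢ(A,K_A))_{i∈L}, (gᵢ(B,K_B))_{i∈L})` is a bijection of
`(F^{a×n})^ℓ × (F^{n×b})^ℓ` onto itself. -/
theorem fully_secure_scheme_exists
    {F : Type*} [Field F] {N ℓ r m n p : ℕ}
    (hℓ : 1 ≤ ℓ) (hN : ℓ < N) (hr : 1 ≤ r) (hrℓN : (r + ℓ) ^ 2 ≤ N)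
    (hm : 1 ≤ m) (hn : 1 ≤ n) (hp : 1 ≤ p)
    (x : Fin N → F) (hx0 : ∀ i, x i ≠ 0)
    (hx : Function.Injective fun i => x i ^ (r + ℓ))
    (hdm : r ∣ m) (hdp : r ∣ p) :
    ∃ (f : Fin N → Matrix (Fin m) (Fin n) F →
          (Fin ℓ → Matrix (Fin (m / r)) (Fin n) F) → Matrix (Fin (m / r)) (Fin n) F)
      (g : Fin N → Matrix (Fin n) (Fin p) F →
          (Fin ℓ → Matrix (Fin n) (Fin (p / r)) F) → Matrix (Fin n) (Fin (p / r)) F)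
      (d : (Fin N → Matrix (Fin (m / r)) (Fin (p / r)) F) → Matrix (Fin m) (Fin p) F),
      (∀ (A : Matrix (Fin m) (Fin n) F) (B : Matrix (Fin n) (Fin p) F)
          (KA : Fin ℓ → Matrix (Fin (m / r)) (Fin n) F)
          (KB : Fin ℓ → Matrix (Fin n) (Fin (p / r)) F),
          d (fun i => f i A KA * g i B KB) = A * B) ∧
      (∀ L : Finset (Fin N), L.card = ℓ →
        ∀ (A : Matrix (Fin m) (Fin n) F) (B : Matrix (Fin n) (Fin p) F),
          Function.Bijective
            (fun KK : (Fin ℓ → Matrix (Fin (m / r)) (Fin n) F) ×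
                (Fin ℓ → Matrix (Fin n) (Fin (p / r)) F) =>
              ((fun i : L => f i.1 A KK.1), (fun i : L => g i.1 B KK.2)))) := by
  have hxi : Function.Injective x := fun i j h => hx (by simp [h])
  obtain ⟨c, hc⟩ := exists_interpolation (by rwa [← sq]) x hxi (q := (r + ℓ) * (r + ℓ))
  -- `eA` and `eB` identify a row, resp. column, index with its block and its position there.
  let eA : Fin r × Fin (m / r) ≃ Fin m :=
    finProdFinEquiv.trans (finCongr (Nat.mul_div_cancel' hdm))
  let eB : Fin r × Fin (p / r) ≃ Fin p :=
    finProdFinEquiv.trans (finCongr (Nat.mul_div_cancel' hdp))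
  refine ⟨fun i A KA => share (x i) (fun j => Matrix.of fun u t => A (eA (j, u)) t) KA,
    fun i B KB => share (x i ^ (r + ℓ)) (fun k => Matrix.of fun t v => B t (eB (k, v))) KB,
    fun Y => Matrix.of fun u v =>
      c (finProdFinEquiv (Fin.castAdd ℓ (eB.symm v).1, Fin.castAdd ℓ (eA.symm u).1))
        (fun i => Y i (eA.symm u).2 (eB.symm v).2), ?_, ?_⟩
  · intro A B KA KB
    ext u v
    simp only [share_mul_share_apply, Matrix.of_apply]
    rw [hc]
    simp [Matrix.mul_apply]
  · intro L hL A B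
    exact (shares_bijective x hx0 hxi _ L hL).prodMap
      (shares_bijective (fun i => x i ^ (r + ℓ)) (fun i => pow_ne_zero _ (hx0 i)) hx _ L hL)
end
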